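/- arXiv:0902.4723 — 2 statements merged into one kernel-verified Lean document; each statement's English description precedes it below -/
import Mathlib

section
/- The set of codes of pairs (R, t), where R is a finite term rewriting system over a finite signature and t is a term over that signature such that R is strongly normalizing on t, is Σ⁰₁-complete. -/
/-!
Strong normalization on a single term is recursively enumerable. The coding of terms is a bijection
with `ℕ` (`termEquiv`), which makes `Term` a `Primcodable` type with primitive recursive structural
recursion (`primrec_term_rec`). A substitution matching a left-hand side `l` against `t` sends each
variable of `l` to a term whose code is at most that of `t`, so a bounded search lists all one-step
reducts of `t` primitive recursively (`reducts`, `mem_reducts`). This uses that left-hand sides are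
not variables and that right-hand sides have no new variables. Since the reduction tree is finitely
branching, König's lemma shows that `R` is strongly normalizing on `t` if and only if some level of
the tree is empty (`sn_iff_level`), and a search for such a level is a semi-decision procedure.

For hardness, one fixed system `rules` interprets the codes `Turing.ToPartrec.Code`, which compute
all partial recursive functions, by means of the continuation machine of Mathlib. Codes,
continuations and lists of numbers are constructor terms, hence normal forms, so a term that
represents a machine state is rewritten only at its root. It has exactly one reduct, representing the
next state, unless the state is halted (`rewrite_next`, `eq_of_rewrite`). Hence the system is
strongly normalizing on the term for `c` with input `n` if and only if the evaluation of `c` on `n`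
halts (`snOn_start_iff`). The small steps of the system refine the steps of Mathlib's machine, and
the extra steps are bounded by recursion on codes and continuations (`accState_norm`,
`accState_ret`).
-/

/-- First-order terms over the fixed countably infinite set of variables
(named by naturals): a term is a variable or a function symbol (named by a
natural number) applied to a list of argument terms. -/
inductive Term : Type
  | var : ℕ → Term
  | app : ℕ → List Term → Term

namespace Term

/-- Homomorphic application of a substitution (a map from variables to terms). -/
def subst (σ : ℕ → Term) : Term → Term
  | var n => σ n
  | app f ts => app f (ts.attach.map (fun x => subst σ x.1))
decreasing_by
  have := List.sizeOf_lt_of_mem x.2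
  simp only [Term.app.sizeOf_spec]; omega

/-- An injective encoding of terms into the natural numbers. -/
def encode : Term → ℕ
  | var n => Nat.pair 0 n
  | app f ts => Nat.pair (f + 1) (Encodable.encode (ts.attach.map (fun x => encode x.1)))
decreasing_by
  have := List.sizeOf_lt_of_mem x.2
  simp only [Term.app.sizeOf_spec]; omega

end Term

/-- `IsVarOf n t` holds iff the variable `n` occurs in the term `t`. -/
inductive IsVarOf (n : ℕ) : Term → Prop
  | var : IsVarOf n (.var n)
  | app {f : ℕ} {ts : List Term} {t : Term} : t ∈ ts → IsVarOf n t → IsVarOf n (.app f ts)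

/-- A term is ground if no variable occurs in it. -/
def Ground (t : Term) : Prop := ∀ n : ℕ, ¬ IsVarOf n t

/-- A (finite) signature is presented by a finite list of pairs
(function symbol, arity); `WFSig` states that each symbol has a unique arity. -/
def WFSig (sig : List (ℕ × ℕ)) : Prop :=
  ∀ p ∈ sig, ∀ q ∈ sig, p.1 = q.1 → p.2 = q.2

/-- `WFTerm sig t`: `t` is a term over the signature `sig`, i.e. every function
symbol occurring in `t` belongs to `sig` and is applied to the correct number
of arguments. -/
inductive WFTerm (sig : List (ℕ × ℕ)) : Term → Prop
  | var (n : ℕ) : WFTerm sig (.var n)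
  | app {f : ℕ} {ts : List Term} : (f, ts.length) ∈ sig →
      (∀ t ∈ ts, WFTerm sig t) → WFTerm sig (.app f ts)

/-- `WFTRS sig R`: the finite list of rules `R` is a term rewriting system over
the signature `sig`: `sig` assigns unique arities, both sides of every rule are
terms over `sig`, no left-hand side is a variable, and every variable occurring
in a right-hand side occurs in the corresponding left-hand side. -/
def WFTRS (sig : List (ℕ × ℕ)) (R : List (Term × Term)) : Prop :=
  WFSig sig ∧ ∀ p ∈ R, WFTerm sig p.1 ∧ WFTerm sig p.2 ∧
    (∀ n : ℕ, p.1 ≠ .var n) ∧ (∀ n : ℕ, IsVarOf n p.2 → IsVarOf n p.1)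

/-- The one-step rewrite relation `→_R` of a TRS `R`: application of a rule
under a substitution, closed under arbitrary one-hole contexts (i.e. embedded
at any argument position at any depth). -/
inductive Rewrite (R : List (Term × Term)) : Term → Term → Prop
  | rule (l r : Term) (σ : ℕ → Term) (h : (l, r) ∈ R) :
      Rewrite R (l.subst σ) (r.subst σ)
  | congr (f : ℕ) (ts₁ ts₂ : List Term) (t t' : Term) (h : Rewrite R t t') :
      Rewrite R (.app f (ts₁ ++ t :: ts₂)) (.app f (ts₁ ++ t' :: ts₂))

/-- Many-step rewriting `→*_R` (reflexive-transitive closure of `→_R`). -/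
def Reduces (R : List (Term × Term)) : Term → Term → Prop :=
  Relation.ReflTransGen (Rewrite R)

/-- `t` is a normal form of `R` (admits no `→_R`-step). -/
def NormalForm (R : List (Term × Term)) (t : Term) : Prop := ∀ u : Term, ¬ Rewrite R t u

/-- `R` is strongly normalizing (terminating) on `t`:
no infinite rewrite sequence starts at `t`. -/
def SNon (R : List (Term × Term)) (t : Term) : Prop :=
  ¬ ∃ f : ℕ → Term, f 0 = t ∧ ∀ n : ℕ, Rewrite R (f n) (f (n + 1))

/-- `R` is weakly normalizing on `t`: some reduction from `t` ends in a normal form. -/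
def WNon (R : List (Term × Term)) (t : Term) : Prop :=
  ∃ s : Term, Reduces R t s ∧ NormalForm R s

/-- `R` is confluent (Church-Rosser) on `t`. -/
def CRon (R : List (Term × Term)) (t : Term) : Prop :=
  ∀ t₁ t₂ : Term, Reduces R t t₁ → Reduces R t t₂ →
    ∃ d : Term, Reduces R t₁ d ∧ Reduces R t₂ d

/-- `R` is weakly confluent (weakly Church-Rosser) on `t`. -/
def WCRon (R : List (Term × Term)) (t : Term) : Prop :=
  ∀ t₁ t₂ : Term, Rewrite R t t₁ → Rewrite R t t₂ →
    ∃ d : Term, Reduces R t₁ d ∧ Reduces R t₂ d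

/-- A root step `s →_{R,ε} t`: `s = ℓσ` and `t = rσ` for some rule `ℓ → r` of `R`. -/
def RootStep (R : List (Term × Term)) (s t : Term) : Prop :=
  ∃ (l r : Term) (σ : ℕ → Term), (l, r) ∈ R ∧ s = l.subst σ ∧ t = r.subst σ

/-- Code of a rewrite rule. -/
def encodeRule (p : Term × Term) : ℕ := Nat.pair p.1.encode p.2.encode

/-- Code of a finite TRS. -/
def encodeTRS (R : List (Term × Term)) : ℕ := Encodable.encode (R.map encodeRule)

/-- Code of a finite signature. -/
def encodeSig (sig : List (ℕ × ℕ)) : ℕ := Encodable.encode sig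

/-- A set `A ⊆ ℕ` is Σ⁰₁ (recursively enumerable) if it is the domain of a
partial computable function. -/
def Sigma01 (A : Set ℕ) : Prop :=
  ∃ f : ℕ →. ℕ, Nat.Partrec f ∧ ∀ n : ℕ, n ∈ A ↔ (f n).Dom

/-- `B` is many-one reducible to `A`: there is a total computable `g` with
`n ∈ B ↔ g n ∈ A` for all `n`. -/
def ManyOneRed (B A : Set ℕ) : Prop :=
  ∃ g : ℕ → ℕ, Computable g ∧ ∀ n : ℕ, n ∈ B ↔ g n ∈ A

/-- `A` is Σ⁰₁-complete. -/
def Sigma01Complete (A : Set ℕ) : Prop :=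
  Sigma01 A ∧ ∀ B : Set ℕ, Sigma01 B → ManyOneRed B A

/-- A set `A ⊆ ℕ` is Π⁰₂ if there is a decidable (computable) predicate
`P ⊆ ℕ³` with `n ∈ A ↔ ∀ x ∃ y, P n x y`. -/
def Pi02 (A : Set ℕ) : Prop :=
  ∃ p : ℕ → ℕ → ℕ → Bool,
    Computable (fun x : ℕ × ℕ × ℕ => p x.1 x.2.1 x.2.2) ∧
    ∀ n : ℕ, n ∈ A ↔ ∀ x : ℕ, ∃ y : ℕ, p n x y = true

/-- `A` is Π⁰₂-complete. -/
def Pi02Complete (A : Set ℕ) : Prop :=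
  Pi02 A ∧ ∀ B : Set ℕ, Pi02 B → ManyOneRed B A

/-- A set `A ⊆ ℕ` is Π¹₁ if there is a decidable (computable) predicate
`P ⊆ ℕ²` such that `n ∈ A` iff for every function `α : ℕ → ℕ` there exists
`k` with `P n ⟨α 0, …, α (k-1)⟩`, where `⟨·⟩` is the (computable) coding of
finite sequences of naturals. -/
def Pi11 (A : Set ℕ) : Prop :=
  ∃ p : ℕ → ℕ → Bool,
    Computable (fun x : ℕ × ℕ => p x.1 x.2) ∧
    ∀ n : ℕ, n ∈ A ↔ ∀ α : ℕ → ℕ, ∃ k : ℕ,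
      p n (Encodable.encode (List.ofFn (fun i : Fin k => α i))) = true

/-- `A` is Π¹₁-complete. -/
def Pi11Complete (A : Set ℕ) : Prop :=
  Pi11 A ∧ ∀ B : Set ℕ, Pi11 B → ManyOneRed B A

/-! ### Terms as a primitive-recursively coded type -/

namespace SNComplete

open Encodable

theorem term_ind {P : Term → Prop} (hv : ∀ n, P (.var n))
    (ha : ∀ f ts, (∀ t ∈ ts, P t) → P (.app f ts)) : ∀ t, P t
  | .var n => hv n
  | .app f ts => ha f ts fun t _ht => term_ind hv ha t
decreasing_by
  have := List.sizeOf_lt_of_mem _ht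
  simp only [Term.app.sizeOf_spec]; omega

@[simp] theorem subst_var (σ : ℕ → Term) (n : ℕ) : (Term.var n).subst σ = σ n := by
  simp [Term.subst]

@[simp] theorem subst_app (σ : ℕ → Term) (f : ℕ) (ts : List Term) :
    (Term.app f ts).subst σ = .app f (ts.map (Term.subst σ)) := by
  rw [Term.subst, List.attach_map_val (f := Term.subst σ)]

theorem encode_var (n : ℕ) : (Term.var n).encode = Nat.pair 0 n := by
  simp [Term.encode]

theorem encode_app (f : ℕ) (ts : List Term) :
    (Term.app f ts).encode = Nat.pair (f + 1) (encode (ts.map Term.encode)) := by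
  rw [Term.encode, List.attach_map_val (f := Term.encode)]

theorem lt_encode_list {l : List ℕ} {a : ℕ} (h : a ∈ l) : a < encode l := by
  induction l with
  | nil => simp at h
  | cons b l ih =>
    rw [encode_list_cons]
    rcases List.mem_cons.1 h with rfl | h
    · exact Nat.lt_succ_of_le (Nat.left_le_pair _ _)
    · exact (ih h).trans_le ((Nat.right_le_pair _ _).trans (Nat.le_succ _))

theorem encode_injective : Function.Injective Term.encode := by
  intro t
  induction t using term_ind with
  | hv n =>
    intro u h
    cases u with
    | var m => rw [encode_var, encode_var, Nat.pair_eq_pair] at h; rw [h.2]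
    | app f ts => rw [encode_var, encode_app, Nat.pair_eq_pair] at h; omega
  | ha f ts ih =>
    intro u h
    cases u with
    | var m => rw [encode_var, encode_app, Nat.pair_eq_pair] at h; omega
    | app g us =>
      rw [encode_app, encode_app, Nat.pair_eq_pair] at h
      have h2 := Encodable.encode_injective h.2
      have : ts = us := by
        clear h
        induction ts generalizing us with
        | nil => cases us with
          | nil => rfl
          | cons => simp at h2
        | cons a ts iht => cases us with
          | nil => simp at h2
          | cons b us =>
            simp only [List.map_cons, List.cons.injEq] at h2
            rw [ih a (by simp) h2.1, iht (fun t ht => ih t (by simp [ht])) us h2.2]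
      rw [this, Nat.succ_injective h.1]

theorem encode_surjective : Function.Surjective Term.encode := by
  intro n
  induction n using Nat.strong_induction_on with
  | _ n ih =>
    rcases h : n.unpair.1 with _ | f
    · exact ⟨.var n.unpair.2, by rw [encode_var, ← h, Nat.pair_unpair]⟩
    · have hl : ∀ m ∈ Denumerable.ofNat (List ℕ) n.unpair.2, ∃ t, Term.encode t = m := by
        intro m hm
        apply ih
        have := lt_encode_list hm
        rw [Denumerable.encode_ofNat] at this
        exact this.trans_le (Nat.unpair_right_le n)
      have : ∃ ts : List Term, ts.map Term.encode = Denumerable.ofNat (List ℕ) n.unpair.2 := by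
        generalize Denumerable.ofNat (List ℕ) n.unpair.2 = l at hl
        exact Set.mem_range.1 (by rw [Set.range_list_map]; simpa using hl)
      obtain ⟨ts, hts⟩ := this
      exact ⟨.app f ts, by rw [encode_app, hts, Denumerable.encode_ofNat, ← h, Nat.pair_unpair]⟩

/-- Every natural number is the code of exactly one term. -/
noncomputable def termEquiv : Term ≃ ℕ :=
  Equiv.ofBijective Term.encode ⟨encode_injective, encode_surjective⟩

noncomputable instance : Primcodable Term := Primcodable.ofEquiv ℕ termEquiv

noncomputable instance : DecidableEq Term := Encodable.decidableEqOfEncodable Term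

theorem encode_eq (t : Term) : encode t = t.encode := rfl

theorem encode_list_map {α : Type*} [Encodable α] (l : List α) :
    encode (l.map encode) = encode l := by
  induction l with
  | nil => rfl
  | cons a l ih => simp [ih]

theorem encode_app' (f : ℕ) (ts : List Term) :
    encode (Term.app f ts) = Nat.pair (f + 1) (encode ts) := by
  rw [encode_eq, encode_app, ← encode_list_map ts]; rfl

theorem lt_encode_list' {l : List Term} {a : Term} (h : a ∈ l) : encode a < encode l := by
  rw [← encode_list_map]
  exact lt_encode_list (List.mem_map_of_mem h)

theorem encode_lt_app {f : ℕ} {ts : List Term} {t : Term} (h : t ∈ ts) :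
    encode t < encode (Term.app f ts) := by
  rw [encode_app']
  exact (lt_encode_list' h).trans_le (Nat.right_le_pair _ _)

theorem primrec_app : Primrec₂ Term.app := by
  refine Primrec₂.encode_iff.1 ?_
  exact (Primrec₂.natPair.comp (Primrec.succ.comp .fst) (Primrec.encode.comp .snd)).of_eq
    fun p => (encode_app' p.1 p.2).symm

theorem primrec_var : Primrec Term.var := by
  refine Primrec.encode_iff.1 ?_
  exact (Primrec₂.natPair.comp (.const 0) .id).of_eq fun n => (encode_var n).symm

theorem primrec_ofNat : Primrec (termEquiv.symm : ℕ → Term) := Primrec.of_equiv_symm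

theorem ofNat_encode (t : Term) : termEquiv.symm (encode t) = t := termEquiv.symm_apply_apply t

/-- Primitive recursion over the subterm structure: `f a (app k ts)` may be computed from
`a`, `k`, `ts` and the list of values of `f a` on `ts`. This is course-of-values recursion on codes,
an argument having a smaller code than the term. -/
theorem primrec_term_rec {α σ : Type*} [Primcodable α] [Primcodable σ] {f : α → Term → σ}
    (h : α → ℕ → σ) (g : α → ℕ × List Term × List σ → σ) (hh : Primrec₂ h) (hg : Primrec₂ g)
    (Hv : ∀ a n, f a (.var n) = h a n)
    (Ha : ∀ a k ts, f a (.app k ts) = g a (k, ts, ts.map (f a))) : Primrec₂ f := by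
  let args : ℕ → List Term := fun n => (decode n.unpair.2 : Option (List Term)).getD []
  have hargs : Primrec args := Primrec.option_getD.comp
    (Primrec.decode.comp (Primrec.snd.comp Primrec.unpair)) (.const [])
  let G : α → List σ → Option σ := fun a L =>
    Nat.casesOn (motive := fun _ => Option σ) L.length.unpair.1 (some (h a L.length.unpair.2))
      fun k => some (g a (k, args L.length, (args L.length).filterMap fun t => L[encode t]?))
  have hlen : Primrec fun p : α × List σ => p.2.length := Primrec.list_length.comp .snd
  have hG : Primrec₂ G := by
    refine Primrec.nat_casesOn (Primrec.fst.comp (Primrec.unpair.comp hlen))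
      (Primrec.option_some.comp (hh.comp .fst (Primrec.snd.comp (Primrec.unpair.comp hlen)))) ?_
    refine Primrec.option_some.comp (hg.comp (Primrec.fst.comp .fst) (.pair .snd (.pair
      (hargs.comp (hlen.comp .fst)) (Primrec.listFilterMap (hargs.comp (hlen.comp .fst)) ?_))))
    exact Primrec.list_getElem?.comp (Primrec.snd.comp (Primrec.fst.comp .fst))
      (Primrec.encode.comp .snd)
  have key : Primrec₂ fun a n => f a (termEquiv.symm n) := by
    refine Primrec.nat_strong_rec _ hG fun a n => ?_
    obtain ⟨t, rfl⟩ : ∃ t : Term, encode t = n := encode_surjective n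
    rw [ofNat_encode]
    simp only [G, List.length_map, List.length_range]
    cases t with
    | var n => rw [encode_eq, encode_var, Nat.unpair_pair, Hv]; rfl
    | app k ts =>
      have hk : (encode (Term.app k ts)).unpair = (k + 1, encode ts) := by
        rw [encode_app', Nat.unpair_pair]
      have hts : args (encode (Term.app k ts)) = ts := by simp [args, hk]
      rw [hts, hk, Ha]
      have hL : (ts.filterMap fun t => ((List.range (encode (Term.app k ts))).map
          fun n => f a (termEquiv.symm n))[encode t]?) = ts.map (f a) := by
        refine (List.filterMap_congr (g := some ∘ f a) fun t ht => ?_).trans (by simp)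
        rw [List.getElem?_map, List.getElem?_range (encode_lt_app ht)]
        simp [ofNat_encode]
      rw [hL]
  exact (key.comp .fst (Primrec.encode.comp .snd)).of_eq fun p => by simp [ofNat_encode]

theorem primrec_list_all {α β : Type*} [Primcodable α] [Primcodable β] {f : α → List β}
    {p : α → β → Bool} (hf : Primrec f) (hp : Primrec₂ p) : Primrec fun a => (f a).all (p a) := by
  refine (Primrec.list_foldr (h := fun a x => p a x.1 && x.2) hf (.const true) ?_).of_eq fun a => ?_
  · exact Primrec.and.comp (hp.comp .fst (Primrec.fst.comp .snd)) (Primrec.snd.comp .snd)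
  · induction f a with
    | nil => rfl
    | cons b l ih => simp [ih]

theorem primrec_list_any {α β : Type*} [Primcodable α] [Primcodable β] {f : α → List β}
    {p : α → β → Bool} (hf : Primrec f) (hp : Primrec₂ p) : Primrec fun a => (f a).any (p a) := by
  refine (Primrec.not.comp (primrec_list_all (p := fun a b => !(p a b)) hf
    (Primrec.not.comp hp))).of_eq fun a => ?_
  simp [List.all_eq_not_any_not]

end SNComplete

/-! ### Computing the one-step reducts of a term -/

namespace SNComplete

open Encodable

theorem subst_congr {σ τ : ℕ → Term} (t : Term) (h : ∀ n, IsVarOf n t → σ n = τ n) :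
    t.subst σ = t.subst τ := by
  induction t using term_ind with
  | hv n => simpa using h n .var
  | ha f ts ih =>
    rw [subst_app, subst_app]
    congr 1
    exact List.map_congr_left fun t ht => ih t ht fun n hn => h n (.app ht hn)

theorem encode_le_subst {σ : ℕ → Term} {n : ℕ} (t : Term) (h : IsVarOf n t) :
    encode (σ n) ≤ encode (t.subst σ) := by
  induction h with
  | var => simp
  | app ht _ ih =>
    rw [subst_app]
    exact ih.trans (encode_lt_app (List.mem_map_of_mem ht)).le

theorem var_le_encode {n : ℕ} {t : Term} (h : IsVarOf n t) : n ≤ encode t := by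
  induction h with
  | var => rw [encode_eq, encode_var]; exact Nat.right_le_pair _ _
  | app ht _ ih => exact ih.trans (encode_lt_app ht).le

/-- The substitution described by a finite list of terms, constantly `var 0` beyond its end. -/
def listSubst (s : List Term) (n : ℕ) : Term := s.getD n (.var 0)

theorem primrec_subst : Primrec₂ fun (s : List Term) t => Term.subst (listSubst s) t :=
  primrec_term_rec (fun s n => listSubst s n) (fun _ p => .app p.1 p.2.2)
    (Primrec.list_getD _) (primrec_app.comp (Primrec.fst.comp .snd)
      (Primrec.snd.comp (Primrec.snd.comp .snd)))
    (fun _ _ => subst_var _ _) (fun _ _ _ => subst_app _ _ _)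

/-- The terms with code at most `N`. -/
noncomputable def termsLe (N : ℕ) : List Term := (List.range (N + 1)).map termEquiv.symm

theorem mem_termsLe {N : ℕ} {t : Term} : t ∈ termsLe N ↔ encode t ≤ N := by
  simp only [termsLe, List.mem_map, List.mem_range]
  constructor
  · rintro ⟨n, hn, rfl⟩
    have : encode (termEquiv.symm n) = n := termEquiv.apply_symm_apply n
    omega
  · exact fun h => ⟨encode t, by omega, ofNat_encode t⟩

theorem primrec_termsLe : Primrec termsLe :=
  Primrec.list_map (Primrec.list_range.comp .succ) (primrec_ofNat.comp .snd)

/-- All lists of length `m` with entries in `S`. -/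
def tuples (S : List Term) (m : ℕ) : List (List Term) :=
  Nat.rec [[]] (fun _ L => L.flatMap fun s => S.map fun x => x :: s) m

theorem mem_tuples {S : List Term} {m : ℕ} {s : List Term} (hl : s.length = m)
    (hs : ∀ x ∈ s, x ∈ S) : s ∈ tuples S m := by
  induction s generalizing m with
  | nil => subst hl; simp [tuples]
  | cons a s ih =>
    subst hl
    have := ih rfl fun x hx => hs x (by simp [hx])
    exact List.mem_flatMap.2 ⟨s, this, List.mem_map.2 ⟨a, hs a (by simp), rfl⟩⟩

theorem primrec_tuples : Primrec₂ tuples := by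
  have h : Primrec₂ fun (S : List Term) (p : ℕ × List (List Term)) =>
      p.2.flatMap fun s => S.map fun x => x :: s := by
    refine Primrec.list_flatMap (f := fun p : List Term × ℕ × List (List Term) => p.2.2)
      (Primrec.snd.comp .snd) (Primrec.list_map (Primrec.fst.comp .fst) ?_)
    exact Primrec.list_cons.comp .snd (Primrec.snd.comp .fst)
  exact Primrec.nat_rec (f := fun _ : List Term => ([[]] : List (List Term))) (.const _) h

/-- The candidates for a substitution matching `l` against `t`: the term substituted for a variable
of `l` has code at most that of `t`. -/
noncomputable def candidates (l t : Term) : List (List Term) :=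
  tuples (termsLe (encode t)) (encode l + 1)

theorem primrec_candidates : Primrec₂ candidates :=
  primrec_tuples.comp (primrec_termsLe.comp (Primrec.encode.comp .snd))
    (Primrec.succ.comp (Primrec.encode.comp .fst))

theorem exists_candidate (l : Term) (σ : ℕ → Term) :
    ∃ s ∈ candidates l (l.subst σ), ∀ n, IsVarOf n l → listSubst s n = σ n := by
  classical
  refine ⟨(List.range (encode l + 1)).map fun n => if IsVarOf n l then σ n else .var 0,
    mem_tuples (by simp) ?_, ?_⟩
  · intro x hx
    obtain ⟨n, _, rfl⟩ := List.mem_map.1 hx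
    rw [mem_termsLe]
    split_ifs with h
    · exact encode_le_subst l h
    · rw [encode_eq, encode_var]; exact Nat.zero_le _
  · intro n hn
    have : n < encode l + 1 := Nat.lt_succ_of_le (var_le_encode hn)
    simp [listSubst, List.getD_eq_getElem?_getD, this, hn]

/-- The results of root steps from `t`. -/
noncomputable def rootReducts (R : List (Term × Term)) (t : Term) : List Term :=
  R.flatMap fun p => (candidates p.1 t).filterMap fun s =>
    if p.1.subst (listSubst s) = t then some (p.2.subst (listSubst s)) else none

theorem primrec_rootReducts : Primrec₂ rootReducts := by
  refine Primrec.list_flatMap .fst ?_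
  refine Primrec.listFilterMap (primrec_candidates.comp (Primrec.fst.comp .snd)
    (Primrec.snd.comp .fst)) ?_
  refine Primrec.ite (PrimrecRel.comp Primrec.eq ?_ ?_) (Primrec.option_some.comp ?_) (.const none)
  · exact primrec_subst.comp .snd (Primrec.fst.comp (Primrec.snd.comp .fst))
  · exact Primrec.snd.comp (Primrec.fst.comp .fst)
  · exact primrec_subst.comp .snd (Primrec.snd.comp (Primrec.snd.comp .fst))

theorem mem_rootReducts {R : List (Term × Term)}
    (hR : ∀ p ∈ R, ∀ n, IsVarOf n p.2 → IsVarOf n p.1) {t u : Term} :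
    u ∈ rootReducts R t ↔ RootStep R t u := by
  simp only [rootReducts, List.mem_flatMap, List.mem_filterMap, Option.ite_none_right_eq_some,
    Option.some.injEq, RootStep]
  constructor
  · rintro ⟨⟨l, r⟩, hp, s, _, rfl, rfl⟩
    exact ⟨l, r, _, hp, rfl, rfl⟩
  · rintro ⟨l, r, σ, hp, rfl, rfl⟩
    obtain ⟨s, hs, h⟩ := exists_candidate l σ
    exact ⟨(l, r), hp, s, hs, subst_congr l h, subst_congr r fun n hn => h n (hR _ hp n hn)⟩

/-- The list of all one-step reducts of a term. -/
noncomputable def reducts (R : List (Term × Term)) : Term → List Term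
  | .var _ => []
  | .app f ts => rootReducts R (.app f ts) ++ (List.range ts.length).flatMap fun i =>
      ((ts.attach.map fun x => reducts R x.1).getD i []).map fun u => .app f (ts.set i u)
decreasing_by
  have := List.sizeOf_lt_of_mem x.2
  simp only [Term.app.sizeOf_spec]; omega

theorem reducts_var (R : List (Term × Term)) (n : ℕ) : reducts R (.var n) = [] := by
  rw [reducts]

theorem reducts_app (R : List (Term × Term)) (f : ℕ) (ts : List Term) :
    reducts R (.app f ts) = rootReducts R (.app f ts) ++ (List.range ts.length).flatMap fun i =>
      ((ts.map (reducts R)).getD i []).map fun u => .app f (ts.set i u) := by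
  rw [reducts, List.attach_map_val (f := reducts R)]

theorem primrec_reducts : Primrec₂ reducts := by
  refine primrec_term_rec (fun _ _ => []) (fun R p => rootReducts R (.app p.1 p.2.1) ++
    (List.range p.2.1.length).flatMap fun i =>
      (p.2.2.getD i []).map fun u => .app p.1 (p.2.1.set i u)) (.const []) ?_ reducts_var
    reducts_app
  have hts : Primrec fun a : List (Term × Term) × ℕ × List Term × List (List Term) => a.2.2.1 :=
    Primrec.fst.comp (Primrec.snd.comp .snd)
  have hf : Primrec fun a : List (Term × Term) × ℕ × List Term × List (List Term) => a.2.1 :=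
    Primrec.fst.comp .snd
  refine Primrec.list_append.comp (primrec_rootReducts.comp .fst (primrec_app.comp hf hts)) ?_
  refine Primrec.list_flatMap (Primrec.list_range.comp (Primrec.list_length.comp hts)) ?_
  refine Primrec.list_map ((Primrec.list_getD []).comp
    (Primrec.snd.comp (Primrec.snd.comp (Primrec.snd.comp .fst))) .snd) ?_
  exact primrec_app.comp (hf.comp (Primrec.fst.comp .fst)) (Primrec.list_set.comp
    (hts.comp (Primrec.fst.comp .fst)) (.pair (Primrec.snd.comp .fst) .snd))

theorem mem_reducts {R : List (Term × Term)} (hl : ∀ p ∈ R, ∀ n, p.1 ≠ .var n)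
    (hR : ∀ p ∈ R, ∀ n, IsVarOf n p.2 → IsVarOf n p.1) {t u : Term} :
    u ∈ reducts R t ↔ Rewrite R t u := by
  constructor
  · intro h
    induction t using term_ind generalizing u with
    | hv n => simp [reducts_var] at h
    | ha f ts ih =>
      rw [reducts_app, List.mem_append] at h
      rcases h with h | h
      · obtain ⟨l, r, σ, hp, h1, rfl⟩ := (mem_rootReducts hR).1 h
        rw [h1]
        exact .rule l r σ hp
      · simp only [List.mem_flatMap, List.mem_range, List.mem_map] at h
        obtain ⟨i, hi, v, hv, rfl⟩ := h
        have hv' : v ∈ reducts R ts[i] := by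
          simpa [List.getD_eq_getElem?_getD, hi] using hv
        have := Rewrite.congr f (ts.take i) (ts.drop (i + 1)) _ _ (ih _ (List.getElem_mem hi) hv')
        rw [List.getElem_cons_drop, List.take_append_drop] at this
        rwa [List.set_eq_take_append_cons_drop, if_pos hi]
  · intro h
    induction h with
    | rule l r σ h =>
      rcases hls : l.subst σ with n | ⟨f, ts⟩
      · cases l with
        | var m => exact absurd rfl (hl _ h m)
        | app f ts => simp at hls
      · rw [reducts_app, List.mem_append]
        exact .inl ((mem_rootReducts hR).2 ⟨l, r, σ, h, hls.symm, rfl⟩)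
    | congr f ts₁ ts₂ t t' _ ih =>
      rw [reducts_app, List.mem_append]
      refine .inr (List.mem_flatMap.2 ⟨ts₁.length, by simp, List.mem_map.2 ⟨t', ?_, ?_⟩⟩)
      · simpa [List.getD_eq_getElem?_getD] using ih
      · simp

end SNComplete

/-! ### Strong normalization is recursively enumerable -/

namespace SNComplete

open Encodable

/-- The endpoints of the reductions of length `k` from `t`. -/
noncomputable def level (R : List (Term × Term)) (t : Term) (k : ℕ) : List Term :=
  (fun L => L.flatMap (reducts R))^[k] [t]

theorem primrec_level : Primrec fun p : (List (Term × Term) × Term) × ℕ => level p.1.1 p.1.2 p.2 :=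
  Primrec.nat_iterate (g := fun p : (List (Term × Term) × Term) × ℕ => [p.1.2])
    (h := fun p L => L.flatMap (reducts p.1.1)) .snd
    (Primrec.list_cons.comp (Primrec.snd.comp .fst) (.const []))
    (Primrec.list_flatMap .snd
      (primrec_reducts.comp (Primrec.fst.comp (Primrec.fst.comp (Primrec.fst.comp .fst))) .snd))

theorem mem_level_succ {R : List (Term × Term)} {t u : Term} {k : ℕ} :
    u ∈ level R t (k + 1) ↔ ∃ v ∈ reducts R t, u ∈ level R v k := by
  induction k generalizing u with
  | zero => simp [level]
  | succ k ih =>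
    have h : ∀ v j, level R v (j + 1) = (level R v j).flatMap (reducts R) := fun v j =>
      Function.iterate_succ_apply' _ _ _
    rw [h, List.mem_flatMap]
    constructor
    · rintro ⟨a, ha, hu⟩
      obtain ⟨v, hv, hav⟩ := ih.1 ha
      exact ⟨v, hv, by rw [h]; exact List.mem_flatMap.2 ⟨a, hav, hu⟩⟩
    · rintro ⟨v, hv, hu⟩
      rw [h] at hu
      obtain ⟨a, hav, hu⟩ := List.mem_flatMap.1 hu
      exact ⟨a, ih.2 ⟨v, hv, hav⟩, hu⟩

theorem sn_iff_acc {R : List (Term × Term)} {t : Term} :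
    SNon R t ↔ Acc (fun a b => Rewrite R b a) t := by
  rw [SNon, ← not_acc_iff_exists_descending_chain (r := fun a b => Rewrite R b a), not_not]

/-- König's lemma for the finitely branching reduction tree: `R` is strongly normalizing on `t`
iff some level of the tree is empty. -/
theorem sn_iff_level {R : List (Term × Term)} (hl : ∀ p ∈ R, ∀ n, p.1 ≠ .var n)
    (hR : ∀ p ∈ R, ∀ n, IsVarOf n p.2 → IsVarOf n p.1) {t : Term} :
    SNon R t ↔ ∃ k, level R t k = [] := by
  rw [sn_iff_acc]
  constructor
  · intro h
    -- strengthened so that the bounds for the finitely many reducts have a common maximum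
    suffices ∃ k, ∀ j ≥ k, level R t j = [] from this.imp fun k hk => hk k le_rfl
    induction h with
    | intro t _ ih =>
      have : ∃ K, ∀ v ∈ reducts R t, ∀ j ≥ K, level R v j = [] := by
        have ih' : ∀ v ∈ reducts R t, ∃ k, ∀ j ≥ k, level R v j = [] :=
          fun v hv => ih v ((mem_reducts hl hR).1 hv)
        generalize reducts R t = L at ih'
        induction L with
        | nil => simp
        | cons v L ihL =>
          obtain ⟨K, hK⟩ := ihL fun v hv => ih' v (by simp [hv])
          obtain ⟨k, hk⟩ := ih' v (by simp)
          refine ⟨max K k, fun w hw j hj => ?_⟩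
          rcases List.mem_cons.1 hw with rfl | hw
          · exact hk j (le_trans (le_max_right _ _) hj)
          · exact hK w hw j (le_trans (le_max_left _ _) hj)
      obtain ⟨K, hK⟩ := this
      refine ⟨K + 1, fun j hj => ?_⟩
      obtain ⟨j, rfl⟩ : ∃ i, j = i + 1 := ⟨j - 1, by omega⟩
      refine List.eq_nil_iff_forall_not_mem.2 fun u hu => ?_
      obtain ⟨v, hv, hu⟩ := mem_level_succ.1 hu
      rw [hK v hv j (by omega)] at hu
      simp at hu
  · rintro ⟨k, hk⟩
    induction k generalizing t with
    | zero => simp [level] at hk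
    | succ k ih =>
      refine ⟨_, fun v hv => ih ?_⟩
      refine List.eq_nil_iff_forall_not_mem.2 fun u hu => ?_
      have := mem_level_succ.2 ⟨v, (mem_reducts hl hR).2 hv, hu⟩
      rw [hk] at this
      simp at this

/-- Boolean version of `WFTerm`. -/
def wfTermB (sig : List (ℕ × ℕ)) : Term → Bool
  | .var _ => true
  | .app f ts => sig.any (fun p => p == (f, ts.length)) &&
      (ts.attach.map fun x => wfTermB sig x.1).all id
decreasing_by
  have := List.sizeOf_lt_of_mem x.2
  simp only [Term.app.sizeOf_spec]; omega

theorem wfTermB_var (sig : List (ℕ × ℕ)) (n : ℕ) : wfTermB sig (.var n) = true := by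
  rw [wfTermB]

theorem wfTermB_app (sig : List (ℕ × ℕ)) (f : ℕ) (ts : List Term) :
    wfTermB sig (.app f ts) =
      (sig.any (fun p => p == (f, ts.length)) && (ts.map (wfTermB sig)).all id) := by
  rw [wfTermB, List.attach_map_val (f := wfTermB sig)]

theorem wfTermB_iff {sig : List (ℕ × ℕ)} {t : Term} : wfTermB sig t = true ↔ WFTerm sig t := by
  induction t using term_ind with
  | hv n => simp [wfTermB_var, WFTerm.var]
  | ha f ts ih =>
    rw [wfTermB_app, Bool.and_eq_true]
    constructor
    · rintro ⟨h1, h2⟩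
      simp only [List.any_eq_true, beq_iff_eq, exists_eq_right] at h1
      simp only [List.all_map, List.all_eq_true, Function.comp, id] at h2
      exact .app h1 fun t ht => (ih t ht).1 (h2 t ht)
    · rintro (_ | ⟨h1, h2⟩)
      simp only [List.any_eq_true, beq_iff_eq, exists_eq_right, List.all_map, List.all_eq_true,
        Function.comp, id]
      exact ⟨h1, fun t ht => (ih t ht).2 (h2 t ht)⟩

theorem primrec_beq {α : Type*} [Primcodable α] [DecidableEq α] [BEq α]
    [LawfulBEq α] : Primrec₂ fun a b : α => a == b :=
  (Primrec.eq.decide (α := α)).of_eq fun a b => by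
    by_cases h : a = b <;> simp [h]

theorem primrec_wfTermB : Primrec₂ wfTermB := by
  refine primrec_term_rec (fun _ _ => true) (fun sig p =>
    sig.any (fun q => q == (p.1, p.2.1.length)) && p.2.2.all id) (.const true) ?_ wfTermB_var
    wfTermB_app
  have hb : Primrec₂ fun (a : List (ℕ × ℕ) × ℕ × List Term × List Bool) (q : ℕ × ℕ) =>
      q == (a.2.1, a.2.2.1.length) := primrec_beq.comp .snd
    (.pair (Primrec.fst.comp (Primrec.snd.comp .fst))
      (Primrec.list_length.comp (Primrec.fst.comp (Primrec.snd.comp (Primrec.snd.comp .fst)))))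
  exact Primrec.and.comp (primrec_list_any .fst hb)
    (primrec_list_all (p := fun _ b => id b) (Primrec.snd.comp (Primrec.snd.comp .snd)) .snd)

/-- The list of variables occurring in a term. -/
def vars : Term → List ℕ
  | .var n => [n]
  | .app _ ts => (ts.attach.map fun x => vars x.1).flatten
decreasing_by
  have := List.sizeOf_lt_of_mem x.2
  simp only [Term.app.sizeOf_spec]; omega

theorem vars_var (n : ℕ) : vars (.var n) = [n] := by rw [vars]

theorem vars_app (f : ℕ) (ts : List Term) : vars (.app f ts) = (ts.map vars).flatten := by
  rw [vars, List.attach_map_val (f := vars)]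

theorem mem_vars {n : ℕ} {t : Term} : n ∈ vars t ↔ IsVarOf n t := by
  constructor
  · intro h
    induction t using term_ind with
    | hv m =>
      rw [vars_var, List.mem_singleton] at h
      exact h ▸ .var
    | ha f ts ih =>
      simp only [vars_app, List.mem_flatten, List.mem_map] at h
      obtain ⟨_, ⟨t, ht, rfl⟩, hn⟩ := h
      exact .app ht (ih t ht hn)
  · intro h
    induction h with
    | var => simp [vars_var]
    | app ht _ ih =>
      rw [vars_app, List.mem_flatten]
      exact ⟨_, List.mem_map_of_mem ht, ih⟩

theorem primrec_vars : Primrec vars := by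
  have : Primrec₂ fun (_ : Unit) t => vars t :=
    primrec_term_rec (fun _ n => [n]) (fun _ p => p.2.2.flatten)
      (Primrec.list_cons.comp .snd (.const []))
      (Primrec.list_flatten.comp (Primrec.snd.comp (Primrec.snd.comp .snd)))
      (fun _ => vars_var) (fun _ => vars_app)
  exact this.comp (.const ()) .id

/-- Tests whether a term is not a variable. -/
def isApp : Term → Bool
  | .var _ => false
  | .app _ _ => true

theorem isApp_iff {t : Term} : isApp t = true ↔ ∀ n, t ≠ .var n := by
  cases t <;> simp [isApp]

theorem primrec_isApp : Primrec isApp := by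
  have : Primrec₂ fun (_ : Unit) t => isApp t :=
    primrec_term_rec (fun _ _ => false) (fun _ _ => true) (.const _) (.const _)
      (fun _ _ => rfl) (fun _ _ _ => rfl)
  exact this.comp (.const ()) .id

/-- Boolean version of `WFSig`. -/
def wfSigB (sig : List (ℕ × ℕ)) : Bool :=
  sig.all fun p => sig.all fun q => !(p.1 == q.1) || p.2 == q.2

theorem wfSigB_iff {sig : List (ℕ × ℕ)} : wfSigB sig = true ↔ WFSig sig := by
  simp only [wfSigB, WFSig, List.all_eq_true, Bool.or_eq_true, Bool.not_eq_true', beq_iff_eq,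
    beq_eq_false_iff_ne, ← imp_iff_not_or]

theorem primrec_wfSigB : Primrec wfSigB := by
  refine primrec_list_all .id (primrec_list_all .fst ?_)
  exact Primrec.or.comp (Primrec.not.comp (primrec_beq.comp
    (Primrec.fst.comp (Primrec.snd.comp .fst)) (Primrec.fst.comp .snd)))
    (primrec_beq.comp (Primrec.snd.comp (Primrec.snd.comp .fst)) (Primrec.snd.comp .snd))

/-- Boolean version of the condition that `WFTRS` puts on a single rule. -/
def wfRuleB (sig : List (ℕ × ℕ)) (p : Term × Term) : Bool :=
  wfTermB sig p.1 && (wfTermB sig p.2 && (isApp p.1 &&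
    (vars p.2).all fun n => (vars p.1).any fun m => m == n))

theorem primrec_wfRuleB : Primrec₂ wfRuleB := by
  have h1 : Primrec fun a : List (ℕ × ℕ) × Term × Term => a.2.1 := Primrec.fst.comp .snd
  have h2 : Primrec fun a : List (ℕ × ℕ) × Term × Term => a.2.2 := Primrec.snd.comp .snd
  refine Primrec.and.comp (primrec_wfTermB.comp .fst h1) (Primrec.and.comp
    (primrec_wfTermB.comp .fst h2) (Primrec.and.comp (primrec_isApp.comp h1)
    (primrec_list_all (primrec_vars.comp h2) (primrec_list_any
      (primrec_vars.comp (h1.comp .fst)) (primrec_beq.comp .snd (Primrec.snd.comp .fst))))))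

/-- Boolean version of `WFTRS`. -/
def wfTRSB (sig : List (ℕ × ℕ)) (R : List (Term × Term)) : Bool :=
  wfSigB sig && R.all (wfRuleB sig)

theorem wfTRSB_iff {sig : List (ℕ × ℕ)} {R : List (Term × Term)} :
    wfTRSB sig R = true ↔ WFTRS sig R := by
  simp only [wfTRSB, WFTRS, wfRuleB, Bool.and_eq_true, wfSigB_iff, List.all_eq_true, wfTermB_iff,
    isApp_iff, List.any_eq_true, beq_iff_eq, exists_eq_right, mem_vars]

theorem primrec_wfTRSB : Primrec₂ wfTRSB :=
  Primrec.and.comp (primrec_wfSigB.comp .fst)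
    (primrec_list_all .snd (primrec_wfRuleB.comp (Primrec.fst.comp .fst) .snd))

/-- Triples of a signature, a list of rules and a term. -/
abbrev Triple : Type := List (ℕ × ℕ) × List (Term × Term) × Term

/-- The set of triples `(sig, R, t)` with `R` a TRS over `sig`, `t` a term over `sig`, and `R`
strongly normalizing on `t`. -/
def SNTriple (x : Triple) : Prop := WFTRS x.1 x.2.1 ∧ WFTerm x.1 x.2.2 ∧ SNon x.2.1 x.2.2

/-- Tests whether `x` is well formed with level `k` of its reduction tree empty. -/
noncomputable def snTest (x : Triple) (k : ℕ) : Bool :=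
  wfTRSB x.1 x.2.1 && (wfTermB x.1 x.2.2 && (level x.2.1 x.2.2 k).length == 0)

theorem snTest_iff {x : Triple} : (∃ k, snTest x k = true) ↔ SNTriple x := by
  simp only [snTest, SNTriple, Bool.and_eq_true, wfTRSB_iff, wfTermB_iff, beq_iff_eq,
    List.length_eq_zero_iff, exists_and_left]
  refine and_congr_right fun h => and_congr_right fun _ => ?_
  exact (sn_iff_level (fun p hp => (h.2 p hp).2.2.1) (fun p hp => (h.2 p hp).2.2.2)).symm

theorem primrec_snTest : Primrec₂ snTest := by
  have h1 : Primrec fun a : Triple × ℕ => a.1.1 := Primrec.fst.comp .fst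
  have h2 : Primrec fun a : Triple × ℕ => a.1.2.1 := Primrec.fst.comp (Primrec.snd.comp .fst)
  have h3 : Primrec fun a : Triple × ℕ => a.1.2.2 := Primrec.snd.comp (Primrec.snd.comp .fst)
  exact Primrec.and.comp (primrec_wfTRSB.comp h1 h2) (Primrec.and.comp (primrec_wfTermB.comp h1 h3)
    (primrec_beq.comp (Primrec.list_length.comp (primrec_level.comp (.pair (.pair h2 h3) .snd)))
      (.const 0)))

theorem encode_triple (x : Triple) :
    encode x = Nat.pair (encodeSig x.1) (Nat.pair (encodeTRS x.2.1) x.2.2.encode) := by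
  rw [encodeTRS, show x.2.1.map encodeRule = x.2.1.map encode from rfl, encode_list_map]
  rfl

theorem mem_set_iff {n : ℕ} :
    (∃ (sig : List (ℕ × ℕ)) (R : List (Term × Term)) (t : Term), WFTRS sig R ∧ WFTerm sig t ∧
      n = Nat.pair (encodeSig sig) (Nat.pair (encodeTRS R) t.encode) ∧ SNon R t) ↔
    ∃ x : Triple, SNTriple x ∧ encode x = n := by
  constructor
  · rintro ⟨sig, R, t, h1, h2, h3, h4⟩
    exact ⟨(sig, R, t), ⟨h1, h2, h4⟩, by rw [h3, encode_triple]⟩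
  · rintro ⟨⟨sig, R, t⟩, ⟨h1, h2, h4⟩, rfl⟩
    exact ⟨sig, R, t, h1, h2, encode_triple _, h4⟩

theorem encode_triple_surjective (n : ℕ) : ∃ x : Triple, encode x = n := by
  let _ : Denumerable Term := Denumerable.ofEquiv ℕ termEquiv
  exact ⟨Denumerable.ofNat Triple n, Denumerable.encode_ofNat n⟩

theorem sigma01_sn : Sigma01 {n | ∃ x : Triple, SNTriple x ∧ encode x = n} := by
  let T : ℕ → ℕ → Bool := fun n k =>
    Option.casesOn (motive := fun _ => Bool) (decode n : Option Triple) false fun x => snTest x k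
  have hT : Primrec₂ T := Primrec.option_casesOn (Primrec.decode.comp .fst) (.const false)
    (primrec_snTest.comp .snd (Primrec.snd.comp .fst))
  have hTe : ∀ x k, T (encode x) k = snTest x k := by
    intro x k
    simp only [T, encodek]
  let F : ℕ → ℕ →. Bool := fun n k => Part.some (T n k)
  refine ⟨fun n => Nat.rfind (F n),
    Partrec.nat_iff.1 (Partrec.rfind hT.to_comp.partrec₂), fun n => ?_⟩
  have hdom : (Nat.rfind (F n)).Dom ↔ ∃ k, T n k = true := by
    rw [Nat.rfind_dom]
    exact ⟨fun ⟨k, hk, _⟩ => ⟨k, (Part.mem_some_iff.1 hk).symm⟩,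
      fun ⟨k, hk⟩ => ⟨k, Part.mem_some_iff.2 hk.symm, fun _ => trivial⟩⟩
  rw [hdom]
  obtain ⟨x, rfl⟩ := encode_triple_surjective n
  simp only [hTe, snTest_iff]
  constructor
  · rintro ⟨y, hy, h⟩
    rwa [← Encodable.encode_injective h]
  · exact fun h => ⟨x, h, rfl⟩

end SNComplete

/-! ### A term rewriting system interpreting `Turing.ToPartrec.Code` -/

namespace SNComplete

open Encodable Turing ToPartrec StateTransition

/-- The numeral `n`, built from the symbols `0` (zero) and `1` (successor). -/
def natT : ℕ → Term
  | 0 => .app 0 []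
  | n + 1 => .app 1 [natT n]

/-- Lists of numerals, built from the symbols `2` (empty list) and `3` (cons). -/
def listT : List ℕ → Term
  | [] => .app 2 []
  | n :: l => .app 3 [natT n, listT l]

/-- Codes as terms, one symbol from `4` to `10` for each constructor. -/
def codeT : Code → Term
  | .zero' => .app 4 []
  | .succ => .app 5 []
  | .tail => .app 6 []
  | .cons f g => .app 7 [codeT f, codeT g]
  | .comp f g => .app 8 [codeT f, codeT g]
  | .case f g => .app 9 [codeT f, codeT g]
  | .fix f => .app 10 [codeT f]

/-- Continuations as terms, one symbol from `11` to `15` for each constructor. -/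
def contT : Cont → Term
  | .halt => .app 11 []
  | .cons₁ f a k => .app 12 [codeT f, listT a, contT k]
  | .cons₂ a k => .app 13 [listT a, contT k]
  | .comp f k => .app 14 [codeT f, contT k]
  | .fix f k => .app 15 [codeT f, contT k]

/-- States of the interpreter: either the code `c` is about to be run on `v` with continuation `k`,
or the machine is in a configuration in the sense of Mathlib. -/
inductive State : Type
  | norm : Code → Cont → List ℕ → State
  | cfg : Cfg → State

/-- States as terms, with the symbols `16` (running a code), `17` (returning to a continuation) and
`18` (halted). -/
def stateT : State → Term
  | .norm c k v => .app 16 [codeT c, contT k, listT v]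
  | .cfg (.ret k v) => .app 17 [contT k, listT v]
  | .cfg (.halt _) => .app 18 []

/-- One small step of the interpreter: the recursions defining `stepNormal` and `stepRet` are
unfolded only once. -/
def next : State → Option State
  | .norm .zero' k v => some (.cfg (.ret k (0 :: v)))
  | .norm .succ k v => some (.cfg (.ret k [v.headI.succ]))
  | .norm .tail k v => some (.cfg (.ret k v.tail))
  | .norm (.cons f g) k v => some (.norm f (.cons₁ g v k) v)
  | .norm (.comp f g) k v => some (.norm g (.comp f k) v)
  | .norm (.case f g) k v =>
    some (v.headI.rec (.norm f k v.tail) fun y _ => .norm g k (y :: v.tail))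
  | .norm (.fix f) k v => some (.norm f (.fix f k) v)
  | .cfg (.ret .halt v) => some (.cfg (.halt v))
  | .cfg (.ret (.cons₁ g a k) v) => some (.norm g (.cons₂ v k) a)
  | .cfg (.ret (.cons₂ a k) v) => some (.cfg (.ret k (a.headI :: v)))
  | .cfg (.ret (.comp f k) v) => some (.norm f k v)
  | .cfg (.ret (.fix f k) v) =>
    some (if v.headI = 0 then .cfg (.ret k v.tail) else .norm f (.fix f k) v.tail)
  | .cfg (.halt _) => none

/-- The interpreter as a term rewriting system. Its rules perform the steps of `next`, with separate
rules for the shapes of a list or number on which `next` makes a case distinction. -/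
def rules : List (Term × Term) :=
  [(.app 16 [.app 4 [], .var 0, .var 1], .app 17 [.var 0, .app 3 [.app 0 [], .var 1]]),
   (.app 16 [.app 5 [], .var 0, .app 2 []],
      .app 17 [.var 0, .app 3 [.app 1 [.app 0 []], .app 2 []]]),
   (.app 16 [.app 5 [], .var 0, .app 3 [.var 1, .var 2]],
      .app 17 [.var 0, .app 3 [.app 1 [.var 1], .app 2 []]]),
   (.app 16 [.app 6 [], .var 0, .app 2 []], .app 17 [.var 0, .app 2 []]),
   (.app 16 [.app 6 [], .var 0, .app 3 [.var 1, .var 2]], .app 17 [.var 0, .var 2]),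
   (.app 16 [.app 7 [.var 0, .var 1], .var 2, .var 3],
      .app 16 [.var 0, .app 12 [.var 1, .var 3, .var 2], .var 3]),
   (.app 16 [.app 8 [.var 0, .var 1], .var 2, .var 3],
      .app 16 [.var 1, .app 14 [.var 0, .var 2], .var 3]),
   (.app 16 [.app 9 [.var 0, .var 1], .var 2, .app 2 []], .app 16 [.var 0, .var 2, .app 2 []]),
   (.app 16 [.app 9 [.var 0, .var 1], .var 2, .app 3 [.app 0 [], .var 3]],
      .app 16 [.var 0, .var 2, .var 3]),
   (.app 16 [.app 9 [.var 0, .var 1], .var 2, .app 3 [.app 1 [.var 3], .var 4]],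
      .app 16 [.var 1, .var 2, .app 3 [.var 3, .var 4]]),
   (.app 16 [.app 10 [.var 0], .var 1, .var 2],
      .app 16 [.var 0, .app 15 [.var 0, .var 1], .var 2]),
   (.app 17 [.app 11 [], .var 0], .app 18 []),
   (.app 17 [.app 12 [.var 0, .var 1, .var 2], .var 3],
      .app 16 [.var 0, .app 13 [.var 3, .var 2], .var 1]),
   (.app 17 [.app 13 [.app 2 [], .var 0], .var 1],
      .app 17 [.var 0, .app 3 [.app 0 [], .var 1]]),
   (.app 17 [.app 13 [.app 3 [.var 0, .var 1], .var 2], .var 3],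
      .app 17 [.var 2, .app 3 [.var 0, .var 3]]),
   (.app 17 [.app 14 [.var 0, .var 1], .var 2], .app 16 [.var 0, .var 1, .var 2]),
   (.app 17 [.app 15 [.var 0, .var 1], .app 2 []], .app 17 [.var 1, .app 2 []]),
   (.app 17 [.app 15 [.var 0, .var 1], .app 3 [.app 0 [], .var 2]], .app 17 [.var 1, .var 2]),
   (.app 17 [.app 15 [.var 0, .var 1], .app 3 [.app 1 [.var 2], .var 3]],
      .app 16 [.var 0, .app 15 [.var 0, .var 1], .var 3])]

/-- The signature of the interpreter. -/
def sig : List (ℕ × ℕ) :=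
  [(0, 0), (1, 1), (2, 0), (3, 2), (4, 0), (5, 0), (6, 0), (7, 2), (8, 2), (9, 2), (10, 1), (11, 0),
    (12, 3), (13, 2), (14, 2), (15, 2), (16, 3), (17, 2), (18, 0)]

theorem wfTRS_rules : WFTRS sig rules := by
  rw [← wfTRSB_iff, wfTRSB, Bool.and_eq_true]
  refine ⟨by decide, ?_⟩
  simp [rules, sig, wfRuleB, wfTermB_var, wfTermB_app, isApp, vars_var, vars_app]

theorem wf_natT (n : ℕ) : wfTermB sig (natT n) = true := by
  induction n with
  | zero => simp [natT, wfTermB_app, sig]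
  | succ n ih => rw [natT, wfTermB_app, List.map_singleton, ih]; rfl

theorem wf_codeT (c : Code) : wfTermB sig (codeT c) = true := by
  induction c <;> simp_all [codeT, wfTermB_app, sig]

/-- The term from which the interpreter runs `c` on the single input `n`. -/
def start (c : Code) (n : ℕ) : Term := stateT (.norm c .halt [n])

theorem wf_start (c : Code) (n : ℕ) : WFTerm sig (start c n) := by
  rw [← wfTermB_iff]
  have h1 := wf_natT n
  have h2 := wf_codeT c
  simp only [sig] at h1 h2
  simp [start, stateT, contT, listT, wfTermB_app, sig, h1, h2]

/-- If all arguments are normal forms, a step can only take place at the root. -/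
theorem rewrite_app {R : List (Term × Term)} {f : ℕ} {ts : List Term} {u : Term}
    (h : Rewrite R (.app f ts) u) (hts : ∀ t ∈ ts, NormalForm R t) : RootStep R (.app f ts) u := by
  generalize hs : Term.app f ts = s at h
  cases h with
  | rule l r σ h => exact ⟨l, r, σ, h, rfl, rfl⟩
  | congr g ts₁ ts₂ t t' h =>
    simp only [Term.app.injEq] at hs
    exact absurd h (hts t (by simp [hs.2]) t')

/-- Only the symbols `16` and `17` are defined by the rules. -/
theorem normalForm_app {f : ℕ} {ts : List Term} (h16 : f ≠ 16) (h17 : f ≠ 17)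
    (hts : ∀ t ∈ ts, NormalForm rules t) : NormalForm rules (.app f ts) := by
  intro u h
  obtain ⟨l, r, σ, hlr, hl, -⟩ := rewrite_app h hts
  have : ∀ p ∈ rules, ∃ us, p.1 = .app 16 us ∨ p.1 = .app 17 us := by simp [rules]
  obtain ⟨us, hp | hp⟩ := this _ hlr
  · simp only at hp
    rw [hp, subst_app, Term.app.injEq] at hl
    exact h16 hl.1
  · simp only at hp
    rw [hp, subst_app, Term.app.injEq] at hl
    exact h17 hl.1

theorem nf_natT (n : ℕ) : NormalForm rules (natT n) := by
  induction n with
  | zero => exact normalForm_app (by simp) (by simp) (by simp)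
  | succ n ih => exact normalForm_app (by simp) (by simp) (by simpa)

theorem nf_listT (l : List ℕ) : NormalForm rules (listT l) := by
  induction l with
  | nil => exact normalForm_app (by simp) (by simp) (by simp)
  | cons n l ih => exact normalForm_app (by simp) (by simp) (by simp [ih, nf_natT])

theorem nf_codeT (c : Code) : NormalForm rules (codeT c) := by
  induction c <;> exact normalForm_app (by simp) (by simp) (by simp [*])

theorem nf_contT (k : Cont) : NormalForm rules (contT k) := by
  induction k <;> exact normalForm_app (by simp) (by simp) (by simp [*, nf_listT, nf_codeT])

theorem rootStep_of_rewrite {s : State} {u : Term} (h : Rewrite rules (stateT s) u) :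
    RootStep rules (stateT s) u := by
  rcases s with ⟨c, k, v⟩ | ⟨v | ⟨k, v⟩⟩ <;>
    exact rewrite_app h (by simp [nf_listT, nf_codeT, nf_contT])

/-- Applies the `i`-th rule, with the variable `n` replaced by the `n`-th term of `s`. -/
theorem fire (i : ℕ) (s : List Term) (hi : i < rules.length := by decide) :
    Rewrite rules (rules[i].1.subst (listSubst s)) (rules[i].2.subst (listSubst s)) :=
  .rule _ _ _ (List.getElem_mem hi)

/-- The rewriting system simulates `next`. -/
theorem rewrite_next {s s' : State} (h : next s = some s') :
    Rewrite rules (stateT s) (stateT s') := by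
  rcases s with ⟨c, k, v⟩ | ⟨v | ⟨k, v⟩⟩
  · cases c with
    | zero' =>
      cases h
      simpa [stateT, listT, natT, codeT, contT, rules, listSubst] using fire 0 [contT k, listT v]
    | succ =>
      cases h
      rcases v with _ | ⟨n, v⟩
      · simpa [stateT, listT, natT, codeT, contT, rules, listSubst] using fire 1 [contT k]
      · simpa [stateT, listT, natT, codeT, contT, rules, listSubst] using fire 2 [contT k, natT n, listT v]
    | tail =>
      cases h
      rcases v with _ | ⟨n, v⟩
      · simpa [stateT, listT, natT, codeT, contT, rules, listSubst] using fire 3 [contT k]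
      · simpa [stateT, listT, natT, codeT, contT, rules, listSubst] using fire 4 [contT k, natT n, listT v]
    | cons f g =>
      cases h
      simpa [stateT, listT, natT, codeT, contT, rules, listSubst] using fire 5 [codeT f, codeT g, contT k, listT v]
    | comp f g =>
      cases h
      simpa [stateT, listT, natT, codeT, contT, rules, listSubst] using fire 6 [codeT f, codeT g, contT k, listT v]
    | case f g =>
      cases h
      rcases v with _ | ⟨_ | n, v⟩
      · simpa [stateT, listT, natT, codeT, contT, rules, listSubst] using fire 7 [codeT f, codeT g, contT k]
      · simpa [stateT, listT, natT, codeT, contT, rules, listSubst] using fire 8 [codeT f, codeT g, contT k, listT v]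
      · simpa [stateT, listT, natT, codeT, contT, rules, listSubst] using fire 9 [codeT f, codeT g, contT k, natT n, listT v]
    | fix f =>
      cases h
      simpa [stateT, listT, natT, codeT, contT, rules, listSubst] using fire 10 [codeT f, contT k, listT v]
  · cases h
  · cases k with
    | halt =>
      cases h
      simpa [stateT, listT, natT, codeT, contT, rules, listSubst] using fire 11 [listT v]
    | cons₁ g a k =>
      cases h
      simpa [stateT, listT, natT, codeT, contT, rules, listSubst] using fire 12 [codeT g, listT a, contT k, listT v]
    | cons₂ a k =>
      cases h
      rcases a with _ | ⟨n, a⟩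
      · simpa [stateT, listT, natT, codeT, contT, rules, listSubst] using fire 13 [contT k, listT v]
      · simpa [stateT, listT, natT, codeT, contT, rules, listSubst] using fire 14 [natT n, listT a, contT k, listT v]
    | comp f k =>
      cases h
      simpa [stateT, listT, natT, codeT, contT, rules, listSubst] using fire 15 [codeT f, contT k, listT v]
    | fix f k =>
      cases h
      rcases v with _ | ⟨_ | n, v⟩
      · simpa [stateT, listT, natT, codeT, contT, rules, listSubst] using fire 16 [codeT f, contT k]
      · simpa [stateT, listT, natT, codeT, contT, rules, listSubst] using fire 17 [codeT f, contT k, listT v]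
      · simpa [stateT, listT, natT, codeT, contT, rules, listSubst] using fire 18 [codeT f, contT k, natT n, listT v]

/-- Only the step given by `next` is possible: the left-hand sides of the rules do not overlap. -/
theorem eq_of_rewrite {s s' : State} {u : Term} (h : next s = some s')
    (hu : Rewrite rules (stateT s) u) : u = stateT s' := by
  obtain ⟨l, r, σ, hlr, hl, rfl⟩ := rootStep_of_rewrite hu
  clear hu
  simp only [rules, List.mem_cons, Prod.mk.injEq, List.not_mem_nil, or_false] at hlr
  rcases s with ⟨c, k, _ | ⟨_ | n, v⟩⟩ | ⟨v | ⟨k, v⟩⟩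
  iterate 3
    cases c <;> cases h <;>
    · casesm* _ ∨ _ <;> obtain ⟨rfl, rfl⟩ := hlr <;>
        simp_all [stateT, listT, natT, codeT, contT]
  · cases h
  · rcases v with _ | ⟨_ | n, v⟩ <;> rcases k with _ | ⟨f, a, k⟩ | ⟨_ | ⟨m, a⟩, k⟩ | _ | _ <;>
      cases h <;>
    · casesm* _ ∨ _ <;> obtain ⟨rfl, rfl⟩ := hlr <;>
        simp_all [stateT, listT, natT, contT]

/-- Strong normalization of `rules` on the term of a state, expressed as accessibility. -/
def AccState (s : State) : Prop := Acc (fun a b => Rewrite rules b a) (stateT s)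

theorem accState_iff_next {s s' : State} (h : next s = some s') : AccState s ↔ AccState s' :=
  ⟨fun hs => hs.inv (rewrite_next h), fun hs => ⟨_, fun u hu => by
    rw [eq_of_rewrite h hu]; exact hs⟩⟩

theorem accState_halt (v : List ℕ) : AccState (.cfg (.halt v)) :=
  ⟨_, fun u hu => absurd hu (normalForm_app (by simp) (by simp) (by simp) u)⟩

/-- The configuration of Mathlib's machine that a state stands for. -/
def toCfg : State → Cfg
  | .norm c k v => stepNormal c k v
  | .cfg c => c

theorem eval_ret (k : Cont) (v : List ℕ) : eval step (.ret k v) = eval step (stepRet k v) :=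
  reaches_eval (Relation.ReflTransGen.single rfl)

/-- A step of `next` stays inside one run of Mathlib's machine. -/
theorem eval_next {s s' : State} (h : next s = some s') :
    eval step (toCfg s') = eval step (toCfg s) := by
  rcases s with ⟨c, k, v⟩ | ⟨v | ⟨k, v⟩⟩
  · cases c <;> cases h <;> try rfl
    rcases v with _ | ⟨_ | n, v⟩ <;> rfl
  · cases h
  · change _ = eval step (.ret k v)
    rw [eval_ret]
    cases k with
    | cons₂ a k => cases h; exact eval_ret _ _
    | fix f k =>
      cases h
      rw [stepRet]
      split_ifs
      · exact eval_ret _ _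
      · rfl
    | _ => cases h; rfl

theorem dom_of_accState {s : State} (h : AccState s) : (eval step (toCfg s)).Dom := by
  unfold AccState at h
  generalize ht : stateT s = t at h
  induction h generalizing s with
  | intro t _ ih =>
    subst ht
    cases hs : next s with
    | some s' => rw [← eval_next hs]; exact ih _ (rewrite_next hs) rfl
    | none =>
      rcases s with ⟨c, k, v⟩ | ⟨v | ⟨k, v⟩⟩
      · cases c <;> cases hs
      · exact Part.dom_iff_mem.2 ⟨.halt v, mem_eval.2 ⟨.refl, rfl⟩⟩
      · cases k <;> cases hs

/-- `stepNormal` is a terminating iteration of `next`: every step of it passes to a subcode. -/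
theorem accState_norm {c : Code} {k : Cont} {v : List ℕ} (h : AccState (.cfg (stepNormal c k v))) :
    AccState (.norm c k v) := by
  induction c generalizing k v with
  | zero' | succ | tail => exact (accState_iff_next rfl).2 h
  | cons f g ihf _ => exact (accState_iff_next rfl).2 (ihf h)
  | comp f g _ ihg => exact (accState_iff_next rfl).2 (ihg h)
  | case f g ihf ihg =>
    rcases v with _ | ⟨_ | n, v⟩
    · exact (accState_iff_next rfl).2 (ihf h)
    · exact (accState_iff_next rfl).2 (ihf h)
    · exact (accState_iff_next rfl).2 (ihg h)
  | fix f ihf => exact (accState_iff_next rfl).2 (ihf h)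

/-- `stepRet` is a terminating iteration of `next` as well: it passes to a shorter continuation until
it starts to run a code. -/
theorem accState_ret {k : Cont} {v : List ℕ} (h : AccState (.cfg (stepRet k v))) :
    AccState (.cfg (.ret k v)) := by
  induction k generalizing v with
  | halt => exact (accState_iff_next rfl).2 h
  | cons₁ f a k _ => exact (accState_iff_next rfl).2 (accState_norm h)
  | cons₂ a k ih => exact (accState_iff_next rfl).2 (ih h)
  | comp f k _ => exact (accState_iff_next rfl).2 (accState_norm h)
  | fix f k ih =>
    refine (accState_iff_next rfl).2 ?_
    rw [stepRet] at h
    split_ifs with hv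
    · rw [if_pos hv] at h; exact ih h
    · rw [if_neg hv] at h; exact accState_norm h

theorem accState_of_dom {c : Cfg} (h : (eval step c).Dom) : AccState (.cfg c) := by
  obtain ⟨b, hb⟩ := Part.dom_iff_mem.1 h
  refine evalInduction (C := fun c => AccState (.cfg c)) hb fun a _ ih => ?_
  rcases a with v | ⟨k, v⟩
  · exact accState_halt v
  · exact accState_ret (ih _ rfl)

/-- The rewriting system terminates on the starting term exactly if the computation halts. -/
theorem snOn_start_iff (c : Code) (n : ℕ) : SNon rules (start c n) ↔ (c.eval [n]).Dom := by
  have h : (c.eval [n]).Dom ↔ (eval step (stepNormal c .halt [n])).Dom := by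
    rw [stepNormal_eval]; rfl
  rw [sn_iff_acc, h]
  exact ⟨dom_of_accState (s := .norm c .halt [n]), fun h => accState_norm (accState_of_dom h)⟩

/-! ### Completeness -/

theorem primrec_natT : Primrec natT := by
  refine (Primrec.nat_rec₁ (.app 0 [] : Term) (f := fun _ t => .app 1 [t]) ?_).of_eq fun n => ?_
  · exact primrec_app.comp (.const 1) (Primrec.list_cons.comp .snd (.const []))
  · induction n with
    | zero => rfl
    | succ n ih => rw [natT, ← ih]

theorem primrec_start (c : Code) : Primrec (start c) := by
  refine primrec_app.comp (.const 16) (Primrec.list_cons.comp (.const (codeT c))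
    (Primrec.list_cons.comp (.const (contT .halt)) (Primrec.list_cons.comp ?_ (.const []))))
  exact primrec_app.comp (.const 3) (Primrec.list_cons.comp primrec_natT
    (.const [listT []]))

theorem manyOneRed_sn {B : Set ℕ} (hB : Sigma01 B) :
    ManyOneRed B {n | ∃ x : Triple, SNTriple x ∧ Encodable.encode x = n} := by
  obtain ⟨f, hf, hB⟩ := hB
  obtain ⟨c, hc⟩ := Code.exists_code (Nat.Partrec'.part_iff₁.2 (Partrec.nat_iff.2 hf))
  have hc (n : ℕ) : (c.eval [n]).Dom ↔ (f n).Dom := by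
    have := hc (n ::ᵥ List.Vector.nil)
    rw [show [n] = (n ::ᵥ List.Vector.nil : List.Vector ℕ 1).1 from rfl, this]
    rfl
  refine ⟨fun n => Encodable.encode ((sig, rules, start c n) : Triple), ?_, fun n => ?_⟩
  · exact (Primrec.encode.comp (Primrec.pair (.const sig) (Primrec.pair (.const rules)
      (primrec_start c)))).to_comp
  · rw [hB, ← hc, ← snOn_start_iff]
    constructor
    · exact fun h => ⟨_, ⟨wfTRS_rules, wf_start c n, h⟩, rfl⟩
    · rintro ⟨x, hx, h⟩
      obtain rfl := Encodable.encode_injective h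
      exact hx.2.2

end SNComplete

/-- Strong normalization of a finite TRS on a single term is Σ⁰₁-complete. -/
theorem sn_single_term_Sigma01Complete :
    Sigma01Complete { n : ℕ | ∃ (sig : List (ℕ × ℕ)) (R : List (Term × Term)) (t : Term),
      WFTRS sig R ∧ WFTerm sig t ∧ n = Nat.pair (encodeSig sig) (Nat.pair (encodeTRS R) t.encode) ∧
      SNon R t } := by
  have h : { n : ℕ | ∃ (sig : List (ℕ × ℕ)) (R : List (Term × Term)) (t : Term),
      WFTRS sig R ∧ WFTerm sig t ∧ n = Nat.pair (encodeSig sig) (Nat.pair (encodeTRS R) t.encode) ∧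
      SNon R t } = {n | ∃ x : SNComplete.Triple, SNComplete.SNTriple x ∧ Encodable.encode x = n} :=
    Set.ext fun _ => SNComplete.mem_set_iff
  rw [h]
  exact ⟨SNComplete.sigma01_sn, fun _ => SNComplete.manyOneRed_sn⟩
end

section
/- The set of codes of pairs (R, t), where R is a finite term rewriting system over a finite signature and t is a term over that signature such that R is weakly normalizing on t, is Σ⁰₁-complete. -/
/-! ### Codes of terms -/

namespace Term

/-- Structural induction on terms, with the induction hypothesis for every argument in the list. -/
theorem ind {P : Term → Prop} (hv : ∀ n, P (var n))
    (ha : ∀ f ts, (∀ t ∈ ts, P t) → P (app f ts)) : ∀ t, P t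
  | var n => hv n
  | app f ts => ha f ts fun t _ => ind hv ha t
decreasing_by
  have := List.sizeOf_lt_of_mem ‹_ ∈ ts›
  simp only [Term.app.sizeOf_spec]; omega

@[simp] theorem subst_var (σ : ℕ → Term) (n : ℕ) : subst σ (var n) = σ n := by
  rw [subst]

@[simp] theorem subst_app (σ : ℕ → Term) (f : ℕ) (ts : List Term) :
    subst σ (app f ts) = app f (ts.map (subst σ)) := by
  rw [subst]; simp

theorem encode_var (n : ℕ) : encode (var n) = Nat.pair 0 n := by
  rw [encode]

theorem encode_app (f : ℕ) (ts : List Term) :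
    encode (app f ts) = Nat.pair (f + 1) (Encodable.encode (ts.map encode)) := by
  rw [encode]; simp

end Term

/-- The code of a list exceeds its entries, which makes codes of arguments smaller than the code of
the term. -/
theorem lt_encode_list {x : ℕ} {l : List ℕ} (h : x ∈ l) : x < Encodable.encode l := by
  induction l with
  | nil => simp at h
  | cons a l ih =>
    rw [Encodable.encode_list_cons]
    rcases List.mem_cons.1 h with rfl | h
    · exact Nat.lt_succ_of_le (Nat.left_le_pair _ _)
    · exact (ih h).trans (Nat.lt_succ_of_le (Nat.right_le_pair _ _))

namespace Term

theorem encode_injective : Function.Injective encode := by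
  intro t
  induction t using ind with
  | hv n =>
    rintro (m | ⟨g, ss⟩) h
    · simpa [encode_var] using h
    · simp [encode_var, encode_app] at h
  | ha f ts ih =>
    rintro (m | ⟨g, ss⟩) h
    · simp [encode_var, encode_app] at h
    · simp only [encode_app, Nat.pair_eq_pair, Encodable.encode_inj, add_left_inj] at h
      obtain ⟨rfl, h⟩ := h
      congr 1
      clear f
      induction ts generalizing ss with
      | nil => cases ss <;> simp_all
      | cons t ts ih' =>
        cases ss with
        | nil => simp at h
        | cons s ss =>
          simp only [List.map_cons, List.cons.injEq] at h
          rw [ih t (by simp) h.1, ih' (fun t ht => ih t (by simp [ht])) ss h.2]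

/-- The tags `0` and `f + 1` leave no gaps, and every number codes a list of numbers, so strong
induction finds a term with a given code. -/
theorem encode_surjective : Function.Surjective encode := by
  intro n
  induction n using Nat.strong_induction_on with
  | _ n ih =>
    obtain ⟨⟨a, b⟩, rfl⟩ := Nat.pairEquiv.surjective n
    cases a with
    | zero => exact ⟨var b, encode_var b⟩
    | succ f =>
      obtain ⟨l, rfl⟩ : ∃ l : List ℕ, Encodable.encode l = b :=
        ⟨Denumerable.ofNat (List ℕ) b, Denumerable.encode_ofNat b⟩
      have : ∀ x ∈ l, ∃ t, encode t = x := fun x hx => by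
        exact ih x ((lt_encode_list hx).trans_le (Nat.right_le_pair _ _))
      obtain ⟨ts, rfl⟩ : ∃ ts : List Term, ts.map encode = l := by
        clear ih
        induction l with
        | nil => exact ⟨[], rfl⟩
        | cons x l ih =>
          obtain ⟨t, ht⟩ := this x (by simp)
          obtain ⟨ts, hts⟩ := ih fun x hx => this x (by simp [hx])
          exact ⟨t :: ts, by simp [ht, hts]⟩
      exact ⟨app f ts, encode_app f ts⟩

/-- Every natural number is the code of exactly one term. -/
noncomputable instance : Denumerable Term :=
  Denumerable.mk' (Equiv.ofBijective encode ⟨encode_injective, encode_surjective⟩)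

/-- Equality of terms is decided classically; its primitive recursiveness comes from the codes. -/
noncomputable instance : DecidableEq Term := Classical.decEq _

theorem encode_eq (t : Term) : Encodable.encode t = t.encode := rfl

theorem encode_list_map {α β : Type*} [Encodable α] [Encodable β] {e : α → β}
    (h : ∀ a, Encodable.encode (e a) = Encodable.encode a) (l : List α) :
    Encodable.encode (l.map e) = Encodable.encode l := by
  induction l with
  | nil => rfl
  | cons a l ih => simp [h, ih]

theorem encode_args (ts : List Term) :
    Encodable.encode (ts.map encode) = Encodable.encode ts :=
  encode_list_map (e := encode) (fun _ => rfl) ts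

end Term

theorem encodeTRS_eq (R : List (Term × Term)) : encodeTRS R = Encodable.encode R :=
  Term.encode_list_map (e := encodeRule) (fun _ => rfl) R

/-! ### Primitive recursion on terms -/

namespace Term

/-- Case distinction on the root of a term. -/
def elim {σ : Type*} (t : Term) (g : ℕ → σ) (h : ℕ → List Term → σ) : σ :=
  match t with
  | var n => g n
  | app f ts => h f ts

/-- The list of immediate subterms. -/
def args (t : Term) : List Term := t.elim (fun _ => []) fun _ ts => ts

section Primrec
variable {α σ : Type*} [Primcodable α] [Primcodable σ]

/-- Case distinction is primitive recursive: the root symbol and the list of arguments can be read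
off the code. -/
theorem primrec_elim {f : α → Term} {g : α → ℕ → σ} {h : α → ℕ × List Term → σ}
    (hf : Primrec f) (hg : Primrec₂ g) (hh : Primrec₂ h) :
    Primrec fun a => (f a).elim (g a) fun m ts => h a (m, ts) := by
  have hu : Primrec fun a => Nat.unpair (Encodable.encode (f a)) :=
    Primrec.unpair.comp (Primrec.encode.comp hf)
  have hd : Primrec₂ fun (a : α) (m : ℕ) =>
      ((Encodable.decode (α := List Term) (Nat.unpair (Encodable.encode (f a))).2).map
        fun ts => h a (m, ts)) := by
    refine Primrec.option_map (Primrec.decode.comp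
      (Primrec.snd.comp (hu.comp Primrec.fst))) ?_
    exact hh.comp (Primrec.fst.comp Primrec.fst)
      (Primrec.pair (Primrec.snd.comp Primrec.fst) Primrec.snd)
  have hs : Primrec fun a => some (g a (Nat.unpair (Encodable.encode (f a))).2) :=
    Primrec.option_some.comp (hg.comp Primrec.id (Primrec.snd.comp hu))
  refine Primrec.option_some_iff.1 ((Primrec.nat_casesOn (Primrec.fst.comp hu) hs hd).of_eq ?_)
  intro a
  cases f a with
  | var n => simp [encode_eq, encode_var, elim]
  | app m ts => simp [encode_eq, encode_app, encode_args, elim]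

theorem primrec_args : Primrec args :=
  primrec_elim (g := fun _ _ => []) (h := fun _ p => p.2) Primrec.id
    (Primrec.const []) (Primrec.snd.comp Primrec.snd)

theorem primrec_var : Primrec var := by
  refine Primrec.encode_iff.1 ((Primrec₂.natPair.comp (Primrec.const 0) Primrec.id).of_eq ?_)
  intro n; simp [encode_eq, encode_var]

theorem primrec_app : Primrec₂ app := by
  refine Primrec.encode_iff.1 ((Primrec₂.natPair.comp (Primrec.succ.comp Primrec.fst)
    (Primrec.encode.comp Primrec.snd)).of_eq ?_)
  rintro ⟨f, ts⟩; simp [encode_eq, encode_app, encode_args]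

theorem encode_lt_of_mem_args {s t : Term} (h : s ∈ t.args) :
    Encodable.encode s < Encodable.encode t := by
  cases t with
  | var n => simp [args, elim] at h
  | app f ts =>
    rw [encode_eq, encode_eq, encode_app]
    exact (lt_encode_list (List.mem_map_of_mem h)).trans_le (Nat.right_le_pair _ _)

/-- Functions defined by structural recursion on terms are primitive recursive, provided the value
at a term is primitive recursive in the term and in the list of values at its arguments. -/
theorem primrec_rec {F : α → Term → σ} {g : α → Term × List σ → σ} (hg : Primrec₂ g)
    (H : ∀ a t, g a (t, t.args.map (F a)) = F a t) : Primrec₂ F :=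
  Primrec.nat_omega_rec F (m := fun _ t => Encodable.encode t) (l := fun _ t => t.args)
    (g := fun a p => some (g a p)) (Primrec.encode.comp Primrec.snd)
    (primrec_args.comp Primrec.snd) (Primrec.option_some.comp hg)
    (fun _ _ _ h => encode_lt_of_mem_args h) (fun a t => by simp [H])

end Primrec

/-! ### The list of one-step reducts -/

/-- All subterms of a term, including the term itself. -/
def subterms : Term → List Term
  | var n => [var n]
  | app f ts => app f ts :: (ts.attach.map fun x => subterms x.1).flatten
decreasing_by
  have := List.sizeOf_lt_of_mem x.2
  simp only [Term.app.sizeOf_spec]; omega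

theorem subterms_var (n : ℕ) : subterms (var n) = [var n] := by rw [subterms]

theorem subterms_app (f : ℕ) (ts : List Term) :
    subterms (app f ts) = app f ts :: (ts.map subterms).flatten := by
  rw [subterms]; simp

theorem mem_subterms_app {s : Term} {f : ℕ} {ts : List Term} :
    s ∈ subterms (app f ts) ↔ s = app f ts ∨ ∃ t ∈ ts, s ∈ subterms t := by
  simp [subterms_app]

theorem subterms_self (t : Term) : t ∈ subterms t := by
  cases t <;> simp [subterms_var, subterms_app]

theorem primrec_subterms : Primrec subterms := by
  have : Primrec₂ fun (_ : Unit) (t : Term) => subterms t := by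
    refine primrec_rec (g := fun _ p => p.1 :: p.2.flatten) ?_ ?_
    · exact Primrec.list_cons.comp (Primrec.fst.comp Primrec.snd)
        (Primrec.list_flatten.comp (Primrec.snd.comp Primrec.snd))
    · rintro _ (n | ⟨f, ts⟩) <;> simp [args, elim, subterms_var, subterms_app]
  exact this.comp (Primrec.const ()) Primrec.id

theorem isVarOf_iff {n : ℕ} {t : Term} : IsVarOf n t ↔ var n ∈ subterms t := by
  constructor
  · intro h
    induction h with
    | var => exact subterms_self _
    | app h _ ih => exact mem_subterms_app.2 (Or.inr ⟨_, h, ih⟩)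
  · induction t using ind with
    | hv m => simp only [subterms_var, List.mem_singleton, var.injEq]; rintro rfl; exact .var
    | ha f ts ih =>
      rw [mem_subterms_app]
      rintro (h | ⟨t, ht, h⟩)
      · cases h
      · exact .app ht (ih t ht h)

theorem subst_mem_subterms (σ : ℕ → Term) {s t : Term} (h : s ∈ subterms t) :
    s.subst σ ∈ subterms (t.subst σ) := by
  induction t using ind with
  | hv m =>
    simp only [subterms_var, List.mem_singleton] at h
    subst h; exact subterms_self _
  | ha f ts ih =>
    rcases mem_subterms_app.1 h with rfl | ⟨t, ht, h⟩
    · exact subterms_self _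
    · rw [subst_app, mem_subterms_app]
      exact Or.inr ⟨t.subst σ, List.mem_map_of_mem ht, ih t ht h⟩

theorem subst_congr {σ τ : ℕ → Term} {t : Term} (h : ∀ n, IsVarOf n t → σ n = τ n) :
    t.subst σ = t.subst τ := by
  induction t using ind with
  | hv m => simpa using h m .var
  | ha f ts ih =>
    simp only [subst_app, app.injEq, true_and]
    exact List.map_congr_left fun t ht => ih t ht fun n hn => h n (.app ht hn)

/-- The substitution presented by a finite association list whose keys are terms; only the keys
that are variables matter, and variables that are not keys are left unchanged. -/
noncomputable def look (L : List (Term × Term)) (n : ℕ) : Term := (L.lookup (var n)).getD (var n)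

theorem look_map {L : List Term} {g : Term → Term} {n : ℕ} (h : var n ∈ L) :
    look (L.map fun k => (k, g k)) n = g (var n) := by
  unfold look
  induction L with
  | nil => simp at h
  | cons a L ih =>
    by_cases ha : var n = a
    · subst ha; simp
    · have : (var n == a) = false := by simpa using ha
      simp only [List.map_cons, List.lookup, this]
      exact ih (by simpa [ha] using h)

theorem primrec_look : Primrec₂ look :=
  Primrec.option_getD.comp (Primrec.listLookup.comp (primrec_var.comp Primrec.snd) Primrec.fst)
    (primrec_var.comp Primrec.snd)

theorem primrec_subst_look : Primrec₂ fun L t => subst (look L) t := by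
  refine primrec_rec
    (g := fun L p => p.1.elim (fun n => look L n) fun f _ => app f p.2) ?_ ?_
  · exact primrec_elim (g := fun a n => look a.1 n) (h := fun a p => app p.1 a.2.2)
      (Primrec.fst.comp Primrec.snd)
      (primrec_look.comp (Primrec.fst.comp Primrec.fst) Primrec.snd)
      (primrec_app.comp (Primrec.fst.comp Primrec.snd)
        (Primrec.snd.comp (Primrec.snd.comp Primrec.fst)))
  · rintro L (n | ⟨f, ts⟩) <;> simp [elim, args]

/-- All association lists with the given list of keys and with values from the given list. -/
def cands (keys vals : List Term) : List (List (Term × Term)) :=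
  keys.foldr (fun k acc => acc.flatMap fun L => vals.map fun v => (k, v) :: L) [[]]

theorem map_mem_cands {keys vals : List Term} {g : Term → Term} (h : ∀ k ∈ keys, g k ∈ vals) :
    (keys.map fun k => (k, g k)) ∈ cands keys vals := by
  induction keys with
  | nil => simp [cands]
  | cons k keys ih =>
    have ih := ih fun k hk => h k (by simp [hk])
    simp only [cands, List.foldr_cons, List.mem_flatMap, List.mem_map, List.map_cons]
    exact ⟨_, ih, g k, h k (by simp), rfl⟩

theorem primrec_cands : Primrec₂ cands := by
  refine Primrec.list_foldr (α := List Term × List Term) (g := fun _ => [[]])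
    (h := fun a (q : Term × List (List (Term × Term))) =>
      q.2.flatMap fun L => a.2.map fun v => (q.1, v) :: L)
    Primrec.fst (Primrec.const [[]]) ?_
  refine Primrec.list_flatMap (Primrec.snd.comp Primrec.snd) ?_
  refine Primrec.list_map (Primrec.snd.comp (Primrec.fst.comp Primrec.fst)) ?_
  refine Primrec.list_cons.comp (Primrec.pair ?_ Primrec.snd) (Primrec.snd.comp Primrec.fst)
  exact Primrec.fst.comp (Primrec.snd.comp (Primrec.fst.comp Primrec.fst))

/-- The results of all root steps from `t`, when no rule has extra variables on its right-hand
side: on the variables of a left-hand side, a matching substitution only takes subterms of `t` as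
values, so finitely many candidates suffice. -/
noncomputable def rootReducts (R : List (Term × Term)) (t : Term) : List Term :=
  R.flatMap fun p => (cands (subterms p.1) (subterms t)).flatMap fun L =>
    if subst (look L) p.1 = t then [subst (look L) p.2] else []

theorem primrec_rootReducts : Primrec₂ rootReducts := by
  refine Primrec.list_flatMap (α := List (Term × Term) × Term) Primrec.fst ?_
  refine Primrec.list_flatMap (primrec_cands.comp
    (primrec_subterms.comp (Primrec.fst.comp Primrec.snd))
    (primrec_subterms.comp (Primrec.snd.comp Primrec.fst))) ?_
  refine Primrec.ite (PrimrecRel.comp Primrec.eq ?_ ?_) (Primrec.list_cons.comp ?_ ?_) ?_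
  · exact primrec_subst_look.comp Primrec.snd
      (Primrec.fst.comp (Primrec.snd.comp Primrec.fst))
  · exact Primrec.snd.comp (Primrec.fst.comp Primrec.fst)
  · exact primrec_subst_look.comp Primrec.snd
      (Primrec.snd.comp (Primrec.snd.comp Primrec.fst))
  · exact Primrec.const []
  · exact Primrec.const []

theorem mem_rootReducts {R : List (Term × Term)}
    (hR : ∀ p ∈ R, ∀ n, IsVarOf n p.2 → IsVarOf n p.1) {t u : Term} :
    u ∈ rootReducts R t ↔ RootStep R t u := by
  simp only [rootReducts, List.mem_flatMap, RootStep]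
  constructor
  · rintro ⟨⟨l, r⟩, hp, L, -, h⟩
    split_ifs at h with hl
    · exact ⟨l, r, look L, hp, hl.symm, by simpa using h⟩
    · simp at h
  · rintro ⟨l, r, σ, hp, rfl, rfl⟩
    have key : ∀ n, IsVarOf n l →
        look ((subterms l).map fun k => (k, k.subst σ)) n = σ n := fun n hn => by
      rw [look_map (g := subst σ) (isVarOf_iff.1 hn), subst_var]
    refine ⟨(l, r), hp, _, map_mem_cands (g := subst σ)
      fun k hk => subst_mem_subterms σ hk, ?_⟩
    rw [if_pos (subst_congr key), subst_congr fun n hn => key n (hR _ hp n hn)]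
    simp

/-- Given a list of terms, each paired with a list of alternatives, all the lists of terms obtained
by replacing exactly one entry by one of its alternatives. -/
def replaceOne (L : List (Term × List Term)) : List (List Term) :=
  List.rec [] (fun p rest ih =>
    (p.2.map fun u => u :: rest.map Prod.fst) ++ ih.map fun us => p.1 :: us) L

theorem primrec_replaceOne : Primrec replaceOne := by
  refine Primrec.list_rec (α := List (Term × List Term)) (β := Term × List Term)
    (σ := List (List Term)) (g := fun _ => [])
    (h := fun _ (q : (Term × List Term) × List (Term × List Term) × List (List Term)) =>
    (q.1.2.map fun u => u :: q.2.1.map Prod.fst) ++ q.2.2.map fun us => q.1.1 :: us)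
    Primrec.id (Primrec.const []) ?_
  refine Primrec.list_append.comp ?_ ?_
  · refine Primrec.list_map (Primrec.snd.comp (Primrec.fst.comp Primrec.snd)) ?_
    refine Primrec.list_cons.comp Primrec.snd ?_
    exact Primrec.list_map (Primrec.fst.comp (Primrec.snd.comp (Primrec.snd.comp Primrec.fst)))
      (Primrec.fst.comp Primrec.snd)
  · refine Primrec.list_map (Primrec.snd.comp (Primrec.snd.comp Primrec.snd)) ?_
    exact Primrec.list_cons.comp
      (Primrec.fst.comp (Primrec.fst.comp (Primrec.snd.comp Primrec.fst))) Primrec.snd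

theorem mem_replaceOne {F : Term → List Term} {ts us : List Term} :
    us ∈ replaceOne (ts.map fun t => (t, F t)) ↔
      ∃ ts₁ t ts₂ u, ts = ts₁ ++ t :: ts₂ ∧ u ∈ F t ∧ us = ts₁ ++ u :: ts₂ := by
  induction ts generalizing us with
  | nil => simp [replaceOne]
  | cons a ts ih =>
    have e : replaceOne ((a :: ts).map fun t => (t, F t)) =
        ((F a).map fun u => u :: ts) ++
          (replaceOne (ts.map fun t => (t, F t))).map fun us => a :: us := by
      simp [replaceOne, Function.comp_def]
    rw [e]
    simp only [List.mem_append, List.mem_map, ih]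
    constructor
    · rintro (⟨u, hu, rfl⟩ | ⟨_, ⟨ts₁, t, ts₂, u, rfl, hu, rfl⟩, rfl⟩)
      · exact ⟨[], a, ts, u, rfl, hu, rfl⟩
      · exact ⟨a :: ts₁, t, ts₂, u, rfl, hu, rfl⟩
    · rintro ⟨_ | ⟨b, ts₁⟩, t, ts₂, u, h, hu, rfl⟩
      · obtain ⟨rfl, rfl⟩ := List.cons.inj h
        exact Or.inl ⟨u, hu, rfl⟩
      · obtain ⟨rfl, rfl⟩ := List.cons.inj h
        exact Or.inr ⟨_, ⟨ts₁, t, ts₂, u, rfl, hu, rfl⟩, rfl⟩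

/-- The list of all one-step reducts of a term, when no rule has extra variables on its right-hand
side (see `mem_reducts`). -/
noncomputable def reducts (R : List (Term × Term)) : Term → List Term
  | var n => rootReducts R (var n)
  | app f ts => rootReducts R (app f ts) ++
      (replaceOne (ts.attach.map fun x => (x.1, reducts R x.1))).map (app f)
decreasing_by
  have := List.sizeOf_lt_of_mem x.2
  simp only [Term.app.sizeOf_spec]; omega

theorem reducts_var (R : List (Term × Term)) (n : ℕ) :
    reducts R (var n) = rootReducts R (var n) := by rw [reducts]

theorem reducts_app (R : List (Term × Term)) (f : ℕ) (ts : List Term) :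
    reducts R (app f ts) = rootReducts R (app f ts) ++
      (replaceOne (ts.map fun t => (t, reducts R t))).map (app f) := by
  rw [reducts, List.map_attach_eq_pmap]
  simp only [List.pmap_eq_map]

theorem primrec_reducts : Primrec₂ reducts := by
  -- The recursion computes the pairs `(t, reducts R t)`, the form in which `replaceOne` needs them.
  have : Primrec₂ fun (R : List (Term × Term)) (t : Term) => (t, reducts R t) := by
    refine primrec_rec (g := fun R p => (p.1, rootReducts R p.1 ++
      p.1.elim (fun _ => []) fun f _ => (replaceOne p.2).map (app f))) ?_ ?_
    · refine Primrec.pair (Primrec.fst.comp Primrec.snd) (Primrec.list_append.comp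
        (primrec_rootReducts.comp Primrec.fst (Primrec.fst.comp Primrec.snd)) ?_)
      refine primrec_elim
        (α := List (Term × Term) × Term × List (Term × List Term)) (g := fun _ _ => [])
        (h := fun a q => (replaceOne a.2.2).map (app q.1))
        (Primrec.fst.comp Primrec.snd) (Primrec.const []) ?_
      refine Primrec.list_map (primrec_replaceOne.comp
        (Primrec.snd.comp (Primrec.snd.comp Primrec.fst))) ?_
      exact primrec_app.comp (Primrec.fst.comp (Primrec.snd.comp Primrec.fst)) Primrec.snd
    · rintro R (n | ⟨f, ts⟩) <;> simp [elim, args, reducts_var, reducts_app]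
  exact Primrec.snd.comp this

theorem mem_reducts {R : List (Term × Term)}
    (hR : ∀ p ∈ R, ∀ n, IsVarOf n p.2 → IsVarOf n p.1) {t u : Term} :
    u ∈ reducts R t ↔ Rewrite R t u := by
  constructor
  · intro h
    induction t using ind generalizing u with
    | hv n =>
      rw [reducts_var, mem_rootReducts hR] at h
      obtain ⟨l, r, σ, hp, e, rfl⟩ := h
      rw [e]; exact .rule l r σ hp
    | ha f ts ih =>
      rw [reducts_app, List.mem_append, mem_rootReducts hR, List.mem_map] at h
      rcases h with ⟨l, r, σ, hp, e, rfl⟩ | ⟨us, h, rfl⟩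
      · rw [e]; exact .rule l r σ hp
      · obtain ⟨ts₁, t, ts₂, u, rfl, hu, rfl⟩ := mem_replaceOne.1 h
        exact .congr f ts₁ ts₂ t u (ih t (by simp) hu)
  · intro h
    induction h with
    | rule l r σ hp =>
      have h := (mem_rootReducts hR).2 ⟨l, r, σ, hp, rfl, rfl⟩
      revert h
      cases l.subst σ with
      | var n => rw [reducts_var]; exact id
      | app f ts => rw [reducts_app]; exact List.mem_append_left _
    | congr f ts₁ ts₂ t t' _ ih =>
      rw [reducts_app]
      exact List.mem_append_right _ (List.mem_map_of_mem
        (mem_replaceOne.2 ⟨ts₁, t, ts₂, t', rfl, ih, rfl⟩))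

/-- The terms obtained from `t` by `k` rounds of listing one-step reducts. -/
noncomputable def level (R : List (Term × Term)) (t : Term) (k : ℕ) : List Term :=
  (fun L => L.flatMap (reducts R))^[k] [t]

theorem primrec_level : Primrec fun x : (List (Term × Term) × Term) × ℕ =>
    level x.1.1 x.1.2 x.2 := by
  refine Primrec.nat_iterate (h := fun x L => L.flatMap (reducts x.1.1)) Primrec.snd
    (Primrec.list_cons.comp (Primrec.snd.comp Primrec.fst) (Primrec.const [])) ?_
  refine Primrec.list_flatMap Primrec.snd (primrec_reducts.comp ?_ Primrec.snd)
  exact Primrec.fst.comp (Primrec.fst.comp (Primrec.fst.comp Primrec.fst))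

theorem reduces_iff {R : List (Term × Term)}
    (hR : ∀ p ∈ R, ∀ n, IsVarOf n p.2 → IsVarOf n p.1) {t u : Term} :
    Reduces R t u ↔ ∃ k, u ∈ level R t k := by
  constructor
  · intro h
    induction h with
    | refl => exact ⟨0, by simp [level]⟩
    | tail _ h ih =>
      obtain ⟨k, hk⟩ := ih
      refine ⟨k + 1, ?_⟩
      rw [level, Function.iterate_succ_apply']
      exact List.mem_flatMap.2 ⟨_, hk, (mem_reducts hR).2 h⟩
  · rintro ⟨k, hk⟩
    induction k generalizing u with
    | zero => simp only [level, Function.iterate_zero, id_eq, List.mem_singleton] at hk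
              subst hk; exact .refl
    | succ k ih =>
      rw [level, Function.iterate_succ_apply'] at hk
      obtain ⟨s, hs, h⟩ := List.mem_flatMap.1 hk
      exact (ih hs).tail ((mem_reducts hR).1 h)

/-- Weak normalization is an unbounded search over a primitive recursive condition. -/
theorem wnon_iff {R : List (Term × Term)}
    (hR : ∀ p ∈ R, ∀ n, IsVarOf n p.2 → IsVarOf n p.1) {t : Term} :
    WNon R t ↔ ∃ k, ∃ s ∈ level R t k, reducts R s = [] := by
  have h : ∀ s, NormalForm R s ↔ reducts R s = [] := fun s => by
    simp [NormalForm, List.eq_nil_iff_forall_not_mem, mem_reducts hR]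
  simp only [WNon, reduces_iff hR, h]
  constructor
  · rintro ⟨s, ⟨k, hk⟩, hs⟩; exact ⟨k, s, hk, hs⟩
  · rintro ⟨k, s, hk, hs⟩; exact ⟨s, ⟨k, hk⟩, hs⟩

end Term

/-! ### Recursive enumerability -/

/-- Well-formedness as a bounded quantification over subterms of a condition on their roots. -/
theorem wfTerm_iff {sig : List (ℕ × ℕ)} {t : Term} :
    WFTerm sig t ↔ ∀ s ∈ t.subterms,
      s.elim (fun _ => true) (fun f ts => decide ((f, ts.length) ∈ sig)) = true := by
  constructor
  · intro h
    induction h with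
    | var n => simp [Term.subterms_var, Term.elim]
    | app hf _ ih =>
      intro s hs
      rcases Term.mem_subterms_app.1 hs with rfl | ⟨t, ht, hs⟩
      · simpa [Term.elim] using hf
      · exact ih t ht s hs
  · intro h
    induction t using Term.ind with
    | hv n => exact .var n
    | ha f ts ih =>
      refine .app (by simpa [Term.elim] using h _ (Term.subterms_self _)) fun t ht => ?_
      exact ih t ht fun s hs => h s (Term.mem_subterms_app.2 (Or.inr ⟨t, ht, hs⟩))

theorem primrecRel_mem {α : Type*} [Primcodable α] : PrimrecRel fun (L : List α) a => a ∈ L :=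
  (PrimrecRel.exists_mem_list Primrec.eq).of_eq (by simp)

theorem primrecRel_wfTerm : PrimrecRel WFTerm := by
  have : PrimrecRel fun (s : Term) (sig : List (ℕ × ℕ)) =>
      s.elim (fun _ => true) (fun f ts => decide ((f, ts.length) ∈ sig)) = true := by
    refine PrimrecRel.comp (R := (· = ·)) Primrec.eq (f := fun x : Term × List (ℕ × ℕ) => _)
      (Term.primrec_elim (g := fun _ _ => true)
        (h := fun x q => decide ((q.1, q.2.length) ∈ x.2)) Primrec.fst (Primrec.const true) ?_)
      (Primrec.const true)
    refine PrimrecPred.decide ?_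
    exact primrecRel_mem.comp (Primrec.snd.comp Primrec.fst) (Primrec.pair
      (Primrec.fst.comp Primrec.snd) (Primrec.list_length.comp (Primrec.snd.comp Primrec.snd)))
  exact ((PrimrecRel.forall_mem_list this).comp (Term.primrec_subterms.comp Primrec.snd)
    Primrec.fst).of_eq fun x => wfTerm_iff.symm

theorem primrecPred_imp {α : Type*} [Primcodable α] {p q : α → Prop} (hp : PrimrecPred p)
    (hq : PrimrecPred q) : PrimrecPred fun a => p a → q a :=
  (hp.not.or hq).of_eq fun _ => imp_iff_not_or.symm

theorem primrecPred_wfSig : PrimrecPred WFSig := by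
  have h : PrimrecRel fun (q p : ℕ × ℕ) => p.1 = q.1 → p.2 = q.2 :=
    primrecPred_imp
      (Primrec.eq.comp (Primrec.fst.comp Primrec.snd) (Primrec.fst.comp Primrec.fst))
      (Primrec.eq.comp (Primrec.snd.comp Primrec.snd) (Primrec.snd.comp Primrec.fst))
  have h₂ : PrimrecRel fun (p : ℕ × ℕ) (sig : List (ℕ × ℕ)) =>
      ∀ q ∈ sig, p.1 = q.1 → p.2 = q.2 :=
    (PrimrecRel.forall_mem_list h).comp Primrec.snd Primrec.fst
  exact (PrimrecRel.forall_mem_list h₂).comp Primrec.id Primrec.id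

theorem primrecPred_isVar : PrimrecPred fun t : Term => ∃ n, t = .var n := by
  have : Primrec fun t : Term => t.elim (fun _ => true) fun _ _ => false :=
    Term.primrec_elim (g := fun _ _ => true) (h := fun _ _ => false) Primrec.id
      (Primrec.const true) (Primrec.const false)
  refine (PrimrecRel.comp Primrec.eq this (Primrec.const true)).of_eq fun t => ?_
  cases t <;> simp [Term.elim]

/-- Only the finitely many variables among the subterms of `r` matter. -/
theorem primrecRel_vars : PrimrecRel fun r l : Term => ∀ n, IsVarOf n r → IsVarOf n l := by
  have h : PrimrecRel fun s l : Term => (∃ n, s = .var n) → s ∈ l.subterms :=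
    primrecPred_imp (primrecPred_isVar.comp Primrec.fst)
      (primrecRel_mem.comp (Term.primrec_subterms.comp Primrec.snd) Primrec.fst)
  refine ((PrimrecRel.forall_mem_list h).comp (Term.primrec_subterms.comp Primrec.fst)
    Primrec.snd).of_eq fun x => ?_
  simp only [Term.isVarOf_iff]
  constructor
  · intro h n hn; exact h _ hn ⟨n, rfl⟩
  · rintro h _ hs ⟨n, rfl⟩; exact h n hs

theorem primrecRel_wfTRS : PrimrecRel WFTRS := by
  have h : PrimrecRel fun (p : Term × Term) (sig : List (ℕ × ℕ)) =>
      WFTerm sig p.1 ∧ WFTerm sig p.2 ∧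
        (∀ n : ℕ, p.1 ≠ .var n) ∧ (∀ n : ℕ, IsVarOf n p.2 → IsVarOf n p.1) := by
    have h₁ : Primrec fun x : (Term × Term) × List (ℕ × ℕ) => x.1.1 :=
      Primrec.fst.comp Primrec.fst
    have h₂ : Primrec fun x : (Term × Term) × List (ℕ × ℕ) => x.1.2 :=
      Primrec.snd.comp Primrec.fst
    refine (primrecRel_wfTerm.comp Primrec.snd h₁).and
      ((primrecRel_wfTerm.comp Primrec.snd h₂).and (PrimrecPred.and ?_
        (primrecRel_vars.comp h₂ h₁)))
    exact (primrecPred_isVar.comp h₁).not.of_eq fun x => not_exists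
  exact (primrecPred_wfSig.comp Primrec.fst).and
    ((PrimrecRel.forall_mem_list h).comp Primrec.snd Primrec.fst)

theorem primrecRel_level_normal :
    PrimrecRel fun (x : List (Term × Term) × Term) (k : ℕ) =>
      ∃ s ∈ Term.level x.1 x.2 k, Term.reducts x.1 s = [] := by
  have h : PrimrecRel fun (s : Term) (R : List (Term × Term)) => Term.reducts R s = [] :=
    PrimrecRel.comp Primrec.eq (Term.primrec_reducts.comp Primrec.snd Primrec.fst)
      (Primrec.const [])
  exact (PrimrecRel.exists_mem_list h).comp Term.primrec_level (Primrec.fst.comp Primrec.fst)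

/-- Projections of primitive recursive relations, along an encoding, are `Σ⁰₁`. -/
theorem sigma01_of_primrecRel {α : Type*} [Primcodable α] {P : α → ℕ → Prop}
    (hP : PrimrecRel P) : Sigma01 {n | ∃ a, n = Encodable.encode a ∧ ∃ k, P a k} := by
  classical
  let q : ℕ → ℕ → Bool := fun n k =>
    Option.casesOn (Encodable.decode₂ α n) false fun a => decide (P a k)
  have hq : Primrec₂ q := by
    refine Primrec.option_casesOn (Primrec.decode₂.comp Primrec.fst) (Primrec.const false) ?_
    exact (hP.comp Primrec.snd (Primrec.snd.comp Primrec.fst)).decide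
  refine ⟨fun n => Nat.rfind fun k => Part.some (q n k),
    Partrec.nat_iff.1 (Partrec.rfind hq.to_comp.partrec₂), fun n => ?_⟩
  refine Iff.trans ?_ Nat.rfind_dom.symm
  have : ∀ k, q n k = true ↔ ∃ a, n = Encodable.encode a ∧ P a k := fun k => by
    have hd : ∀ a, Encodable.decode₂ α n = some a ↔ Encodable.encode a = n :=
      fun a => Encodable.mem_decode₂
    cases h : Encodable.decode₂ α n with
    | none =>
      simp only [q, h, Bool.false_eq_true, false_iff]
      rintro ⟨a, ha, -⟩
      simp [(hd a).2 ha.symm] at h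
    | some a =>
      simp only [q, h, decide_eq_true_eq]
      constructor
      · exact fun hp => ⟨a, ((hd a).1 h).symm, hp⟩
      · rintro ⟨b, hb, hp⟩
        rw [(hd b).2 hb.symm] at h
        cases h; exact hp
  constructor
  · rintro ⟨a, ha, k, hk⟩
    exact ⟨k, Part.mem_some_iff.2 ((this k).2 ⟨a, ha, hk⟩).symm, fun _ => trivial⟩
  · rintro ⟨k, hk, -⟩
    obtain ⟨a, ha, hp⟩ := (this k).1 (Part.mem_some_iff.1 hk).symm
    exact ⟨a, ha, k, hp⟩

theorem sigma01_wn :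
    Sigma01 { n : ℕ | ∃ (sig : List (ℕ × ℕ)) (R : List (Term × Term)) (t : Term),
      WFTRS sig R ∧ WFTerm sig t ∧ n = Nat.pair (encodeSig sig) (Nat.pair (encodeTRS R) t.encode) ∧
      WNon R t } := by
  have hP : PrimrecRel fun (x : List (ℕ × ℕ) × List (Term × Term) × Term) (k : ℕ) =>
      WFTRS x.1 x.2.1 ∧ WFTerm x.1 x.2.2 ∧
        ∃ s ∈ Term.level x.2.1 x.2.2 k, Term.reducts x.2.1 s = [] := by
    have h₁ : Primrec fun y : (List (ℕ × ℕ) × List (Term × Term) × Term) × ℕ => y.1.1 :=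
      Primrec.fst.comp Primrec.fst
    have h₂ : Primrec fun y : (List (ℕ × ℕ) × List (Term × Term) × Term) × ℕ => y.1.2 :=
      Primrec.snd.comp Primrec.fst
    exact (primrecRel_wfTRS.comp h₁ (Primrec.fst.comp h₂)).and
      ((primrecRel_wfTerm.comp h₁ (Primrec.snd.comp h₂)).and
        (primrecRel_level_normal.comp h₂ Primrec.snd))
  convert sigma01_of_primrecRel hP using 1
  ext n
  constructor
  · rintro ⟨sig, R, t, hR, ht, rfl, hw⟩
    obtain ⟨k, hk⟩ := (Term.wnon_iff fun p hp => (hR.2 p hp).2.2.2).1 hw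
    exact ⟨(sig, R, t), by rw [encodeTRS_eq]; rfl, k, hR, ht, hk⟩
  · rintro ⟨⟨sig, R, t⟩, rfl, k, hR, ht, hk⟩
    exact ⟨sig, R, t, hR, ht, by rw [encodeTRS_eq]; rfl,
      (Term.wnon_iff fun p hp => (hR.2 p hp).2.2.2).2 ⟨k, hk⟩⟩

/-! ### Simulation of partial recursive functions -/

namespace Sim

open Turing.ToPartrec StateTransition

/-- The constructor symbols: `0` zero, `1` successor, `2` nil, `3` cons for lists of numbers;
`4`-`10` for the constructors of `Turing.ToPartrec.Code`; `11`-`15` for those of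
`Turing.ToPartrec.Cont`. -/
def conSig : List (ℕ × ℕ) :=
  [(0, 0), (1, 1), (2, 0), (3, 2), (4, 0), (5, 0), (6, 0), (7, 2), (8, 2), (9, 2), (10, 1),
    (11, 0), (12, 3), (13, 2), (14, 2), (15, 2)]

/-- The constructor symbols together with the configuration symbols: `16` evaluates a code under a
continuation at an input, `17` returns a value to a continuation, `18` marks the final value. -/
def sig : List (ℕ × ℕ) := [(16, 3), (17, 2), (18, 1)] ++ conSig

/-- The numeral `0`. -/
abbrev zero : Term := .app 0 []
/-- The successor of a numeral. -/
abbrev suc (t : Term) : Term := .app 1 [t]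
/-- The empty list of numbers. -/
abbrev nil : Term := .app 2 []
/-- The list with head `t` and tail `v`. -/
abbrev cons (t v : Term) : Term := .app 3 [t, v]
/-- The code `Code.zero'` of the function prepending `0` to a list. -/
abbrev cZero : Term := .app 4 []
/-- The code `Code.succ`. -/
abbrev cSucc : Term := .app 5 []
/-- The code `Code.tail`. -/
abbrev cTail : Term := .app 6 []
/-- The code constructor `Code.cons`. -/
abbrev cCons (f g : Term) : Term := .app 7 [f, g]
/-- The code constructor `Code.comp`. -/
abbrev cComp (f g : Term) : Term := .app 8 [f, g]
/-- The code constructor `Code.case`. -/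
abbrev cCase (f g : Term) : Term := .app 9 [f, g]
/-- The code constructor `Code.fix`. -/
abbrev cFix (f : Term) : Term := .app 10 [f]
/-- The continuation `Cont.halt`. -/
abbrev kHalt : Term := .app 11 []
/-- The continuation constructor `Cont.cons₁`. -/
abbrev kCons₁ (f v k : Term) : Term := .app 12 [f, v, k]
/-- The continuation constructor `Cont.cons₂`. -/
abbrev kCons₂ (v k : Term) : Term := .app 13 [v, k]
/-- The continuation constructor `Cont.comp`. -/
abbrev kComp (f k : Term) : Term := .app 14 [f, k]
/-- The continuation constructor `Cont.fix`. -/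
abbrev kFix (f k : Term) : Term := .app 15 [f, k]
/-- The configuration evaluating the code `c` at the list `v` under the continuation `k`. -/
abbrev run (c k v : Term) : Term := .app 16 [c, k, v]
/-- The configuration returning the list `v` to the continuation `k`. -/
abbrev ret (k v : Term) : Term := .app 17 [k, v]
/-- The halting configuration with result `v`. -/
abbrev done (v : Term) : Term := .app 18 [v]

/-- The fixed rewriting system, an abstract machine evaluating `Turing.ToPartrec.Code`. The
variables `0` and `1` stand for codes, `2` for a continuation, `3` and `5` for lists of numbers and
`4` for a number. -/
def rules : List (Term × Term) :=
  [(run cZero (.var 2) (.var 3), ret (.var 2) (cons zero (.var 3))),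
    (run cSucc (.var 2) nil, ret (.var 2) (cons (suc zero) nil)),
    (run cSucc (.var 2) (cons (.var 4) (.var 3)), ret (.var 2) (cons (suc (.var 4)) nil)),
    (run cTail (.var 2) nil, ret (.var 2) nil),
    (run cTail (.var 2) (cons (.var 4) (.var 3)), ret (.var 2) (.var 3)),
    (run (cCons (.var 0) (.var 1)) (.var 2) (.var 3),
      run (.var 0) (kCons₁ (.var 1) (.var 3) (.var 2)) (.var 3)),
    (run (cComp (.var 0) (.var 1)) (.var 2) (.var 3),
      run (.var 1) (kComp (.var 0) (.var 2)) (.var 3)),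
    (run (cCase (.var 0) (.var 1)) (.var 2) nil, run (.var 0) (.var 2) nil),
    (run (cCase (.var 0) (.var 1)) (.var 2) (cons zero (.var 3)), run (.var 0) (.var 2) (.var 3)),
    (run (cCase (.var 0) (.var 1)) (.var 2) (cons (suc (.var 4)) (.var 3)),
      run (.var 1) (.var 2) (cons (.var 4) (.var 3))),
    (run (cFix (.var 0)) (.var 2) (.var 3), run (.var 0) (kFix (.var 0) (.var 2)) (.var 3)),
    (ret kHalt (.var 3), done (.var 3)),
    (ret (kCons₁ (.var 0) (.var 5) (.var 2)) (.var 3),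
      run (.var 0) (kCons₂ (.var 3) (.var 2)) (.var 5)),
    (ret (kCons₂ nil (.var 2)) (.var 3), ret (.var 2) (cons zero (.var 3))),
    (ret (kCons₂ (cons (.var 4) (.var 5)) (.var 2)) (.var 3),
      ret (.var 2) (cons (.var 4) (.var 3))),
    (ret (kComp (.var 0) (.var 2)) (.var 3), run (.var 0) (.var 2) (.var 3)),
    (ret (kFix (.var 0) (.var 2)) nil, ret (.var 2) nil),
    (ret (kFix (.var 0) (.var 2)) (cons zero (.var 3)), ret (.var 2) (.var 3)),
    (ret (kFix (.var 0) (.var 2)) (cons (suc (.var 4)) (.var 3)),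
      run (.var 0) (kFix (.var 0) (.var 2)) (.var 3))]

/-- The root step of `rules` as a function. -/
def tstep : Term → Option Term
  | .app 16 [.app 4 [], k, v] => some (ret k (cons zero v))
  | .app 16 [.app 5 [], k, .app 2 []] => some (ret k (cons (suc zero) nil))
  | .app 16 [.app 5 [], k, .app 3 [n, _]] => some (ret k (cons (suc n) nil))
  | .app 16 [.app 6 [], k, .app 2 []] => some (ret k nil)
  | .app 16 [.app 6 [], k, .app 3 [_, v]] => some (ret k v)
  | .app 16 [.app 7 [f, g], k, v] => some (run f (kCons₁ g v k) v)
  | .app 16 [.app 8 [f, g], k, v] => some (run g (kComp f k) v)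
  | .app 16 [.app 9 [f, _], k, .app 2 []] => some (run f k nil)
  | .app 16 [.app 9 [f, _], k, .app 3 [.app 0 [], v]] => some (run f k v)
  | .app 16 [.app 9 [_, g], k, .app 3 [.app 1 [n], v]] => some (run g k (cons n v))
  | .app 16 [.app 10 [f], k, v] => some (run f (kFix f k) v)
  | .app 17 [.app 11 [], v] => some (done v)
  | .app 17 [.app 12 [f, a, k], v] => some (run f (kCons₂ v k) a)
  | .app 17 [.app 13 [.app 2 [], k], v] => some (ret k (cons zero v))
  | .app 17 [.app 13 [.app 3 [n, _], k], v] => some (ret k (cons n v))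
  | .app 17 [.app 14 [f, k], v] => some (run f k v)
  | .app 17 [.app 15 [_, k], .app 2 []] => some (ret k nil)
  | .app 17 [.app 15 [_, k], .app 3 [.app 0 [], v]] => some (ret k v)
  | .app 17 [.app 15 [f, k], .app 3 [.app 1 [_], v]] => some (run f (kFix f k) v)
  | _ => none

/-- Matching a left-hand side of `rules` agrees with the case distinction of `tstep`. -/
theorem tstep_of_rule (σ : ℕ → Term) :
    ∀ p ∈ rules, tstep (p.1.subst σ) = some (p.2.subst σ) := by
  simp only [rules, List.forall_mem_cons, Term.subst_app, Term.subst_var, List.map_cons,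
    List.map_nil]
  refine ⟨rfl, rfl, rfl, rfl, rfl, rfl, rfl, rfl, rfl, rfl, rfl, rfl, rfl, rfl, rfl, rfl, rfl, rfl,
    rfl, by simp⟩

theorem wfTerm_app {sg : List (ℕ × ℕ)} {f : ℕ} {ts : List Term} :
    WFTerm sg (.app f ts) ↔ (f, ts.length) ∈ sg ∧ ∀ t ∈ ts, WFTerm sg t :=
  ⟨fun h => by cases h with | app h₁ h₂ => exact ⟨h₁, h₂⟩, fun h => .app h.1 h.2⟩

theorem isVarOf_app {n f : ℕ} {ts : List Term} :
    IsVarOf n (.app f ts) ↔ ∃ t ∈ ts, IsVarOf n t :=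
  ⟨fun h => by cases h with | app h₁ h₂ => exact ⟨_, h₁, h₂⟩, fun ⟨_, h₁, h₂⟩ => .app h₁ h₂⟩

theorem isVarOf_var {n m : ℕ} : IsVarOf n (.var m) ↔ n = m :=
  ⟨fun h => by cases h; rfl, fun h => h ▸ .var⟩

theorem wfTRS_rules : WFTRS sig rules := by
  refine ⟨by unfold WFSig; decide, ?_⟩
  simp only [rules, List.forall_mem_cons, List.not_mem_nil, false_implies, implies_true, and_true]
  refine ⟨?_, ?_, ?_, ?_, ?_, ?_, ?_, ?_, ?_, ?_, ?_, ?_, ?_, ?_, ?_, ?_, ?_, ?_, ?_⟩ <;>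
    simp [wfTerm_app, isVarOf_app, isVarOf_var, WFTerm.var, sig, conSig] <;>
    (intros; tauto)

theorem wfTerm_mono {s₁ s₂ : List (ℕ × ℕ)} (h : s₁ ⊆ s₂) {t : Term} (ht : WFTerm s₁ t) :
    WFTerm s₂ t := by
  induction ht with
  | var n => exact .var n
  | app hf _ ih => exact .app (h hf) ih

theorem root_of_rule :
    ∀ p ∈ rules, ∃ f ts, p.1 = .app f ts ∧ (f = 16 ∨ f = 17) := by
  simp [rules]

/-- Terms built from constructors are normal forms. -/
theorem not_rewrite_of_con {t u : Term} (ht : WFTerm conSig t) : ¬ Rewrite rules t u := by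
  intro h
  induction h with
  | rule l r σ hp =>
    obtain ⟨f, ts, rfl, hf⟩ := root_of_rule _ hp
    rw [Term.subst_app, wfTerm_app] at ht
    rcases hf with rfl | rfl <;> simp [conSig] at ht
  | congr f ts₁ ts₂ t t' _ ih =>
    exact ih ((wfTerm_app.1 ht).2 t (by simp))

/-- Configurations: a configuration symbol applied to constructor terms. -/
def Good (t : Term) : Prop :=
  ∃ f ts, t = .app f ts ∧ (f, ts.length) ∈ [(16, 3), (17, 2), (18, 1)] ∧
    ∀ s ∈ ts, WFTerm conSig s

/-- A configuration is rewritten only at its root, since its arguments are normal forms. -/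
theorem tstep_of_rewrite {t u : Term} (ht : Good t) (h : Rewrite rules t u) :
    tstep t = some u := by
  cases h with
  | rule l r σ hp => exact tstep_of_rule σ _ hp
  | congr f ts₁ ts₂ s s' hs =>
    obtain ⟨g, ts, e, -, hts⟩ := ht
    cases e
    exact absurd hs (not_rewrite_of_con (hts s (by simp)))

/-- A step by the `i`-th rule; the substitution maps the variables `0, 1, …` to the entries of
`L`. -/
theorem rewrite_of_getElem (i : ℕ) (L : List Term) (hi : i < rules.length) {t u : Term}
    (ht : (rules[i]).1.subst (fun n => L.getD n zero) = t)
    (hu : (rules[i]).2.subst (fun n => L.getD n zero) = u) : Rewrite rules t u := by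
  subst ht hu
  exact .rule _ _ _ (List.getElem_mem hi)

theorem rewrite_of_tstep {t u : Term} (h : tstep t = some u) : Rewrite rules t u := by
  have z := zero
  unfold tstep at h
  split at h <;> cases h
  · rename_i k v
    exact rewrite_of_getElem 0 [z, z, k, v] (by decide) (by simp [rules]) (by simp [rules])
  · rename_i k
    exact rewrite_of_getElem 1 [z, z, k] (by decide) (by simp [rules]) (by simp [rules])
  · rename_i k n v
    exact rewrite_of_getElem 2 [z, z, k, v, n] (by decide) (by simp [rules]) (by simp [rules])
  · rename_i k
    exact rewrite_of_getElem 3 [z, z, k] (by decide) (by simp [rules]) (by simp [rules])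
  · rename_i k n v
    exact rewrite_of_getElem 4 [z, z, k, v, n] (by decide) (by simp [rules]) (by simp [rules])
  · rename_i f g k v
    exact rewrite_of_getElem 5 [f, g, k, v] (by decide) (by simp [rules]) (by simp [rules])
  · rename_i f g k v
    exact rewrite_of_getElem 6 [f, g, k, v] (by decide) (by simp [rules]) (by simp [rules])
  · rename_i f g k
    exact rewrite_of_getElem 7 [f, g, k] (by decide) (by simp [rules]) (by simp [rules])
  · rename_i f g k v
    exact rewrite_of_getElem 8 [f, g, k, v] (by decide) (by simp [rules]) (by simp [rules])
  · rename_i f g k n v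
    exact rewrite_of_getElem 9 [f, g, k, v, n] (by decide) (by simp [rules]) (by simp [rules])
  · rename_i f k v
    exact rewrite_of_getElem 10 [f, z, k, v] (by decide) (by simp [rules]) (by simp [rules])
  · rename_i v
    exact rewrite_of_getElem 11 [z, z, z, v] (by decide) (by simp [rules]) (by simp [rules])
  · rename_i f a k v
    exact rewrite_of_getElem 12 [f, z, k, v, z, a] (by decide) (by simp [rules]) (by simp [rules])
  · rename_i k v
    exact rewrite_of_getElem 13 [z, z, k, v] (by decide) (by simp [rules]) (by simp [rules])
  · rename_i n a k v
    exact rewrite_of_getElem 14 [z, z, k, v, n, a] (by decide) (by simp [rules]) (by simp [rules])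
  · rename_i f k v
    exact rewrite_of_getElem 15 [f, z, k, v] (by decide) (by simp [rules]) (by simp [rules])
  · rename_i f k
    exact rewrite_of_getElem 16 [f, z, k] (by decide) (by simp [rules]) (by simp [rules])
  · rename_i f k v
    exact rewrite_of_getElem 17 [f, z, k, v] (by decide) (by simp [rules]) (by simp [rules])
  · rename_i f k n v
    exact rewrite_of_getElem 18 [f, z, k, v, n] (by decide) (by simp [rules]) (by simp [rules])

theorem Good.tstep {t u : Term} (ht : Good t) (h : tstep t = some u) : Good u := by
  obtain ⟨f, ts, rfl, -, hts⟩ := ht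
  unfold Sim.tstep at h
  split at h <;> cases h <;> rename_i e <;> cases e <;>
    refine ⟨_, _, rfl, by simp, ?_⟩ <;>
    simp [wfTerm_app, conSig] at hts ⊢ <;> tauto

/-- From a configuration, rewriting is deterministic, so weak normalization is halting. -/
theorem wnon_iff_eval {t : Term} (ht : Good t) : WNon rules t ↔ (eval tstep t).Dom := by
  constructor
  · rintro ⟨s, hs, hn⟩
    have : Reaches tstep t s ∧ Good s := by
      clear hn
      induction hs with
      | refl => exact ⟨.refl, ht⟩
      | tail _ h ih =>
        have e := tstep_of_rewrite ih.2 h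
        exact ⟨ih.1.tail e, ih.2.tstep e⟩
    refine Part.dom_iff_mem.2 ⟨s, mem_eval.2 ⟨this.1, ?_⟩⟩
    cases e : tstep s with
    | none => rfl
    | some u => exact absurd (rewrite_of_tstep e) (hn u)
  · intro h
    obtain ⟨s, hs⟩ := Part.dom_iff_mem.1 h
    obtain ⟨hr, hn⟩ := mem_eval.1 hs
    have : Reduces rules t s ∧ Good s := by
      clear hs hn
      induction hr with
      | refl => exact ⟨.refl, ht⟩
      | tail _ h ih => exact ⟨ih.1.tail (rewrite_of_tstep h), ih.2.tstep h⟩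
    refine ⟨s, this.1, fun u hu => ?_⟩
    rw [tstep_of_rewrite this.2 hu] at hn
    cases hn

/-- Numerals. -/
def num : ℕ → Term
  | 0 => zero
  | n + 1 => suc (num n)

/-- Lists of numbers as terms. -/
def lst : List ℕ → Term
  | [] => nil
  | n :: v => cons (num n) (lst v)

/-- Codes as terms. -/
def code : Code → Term
  | .zero' => cZero
  | .succ => cSucc
  | .tail => cTail
  | .cons f g => cCons (code f) (code g)
  | .comp f g => cComp (code f) (code g)
  | .case f g => cCase (code f) (code g)
  | .fix f => cFix (code f)

/-- Continuations as terms. -/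
def cont : Cont → Term
  | .halt => kHalt
  | .cons₁ f v k => kCons₁ (code f) (lst v) (cont k)
  | .cons₂ v k => kCons₂ (lst v) (cont k)
  | .comp f k => kComp (code f) (cont k)
  | .fix f k => kFix (code f) (cont k)

/-- Configurations of Mathlib's abstract machine as terms. -/
def cfg : Cfg → Term
  | .halt v => done (lst v)
  | .ret k v => ret (cont k) (lst v)

/-- `stepNormal` performs by recursion on the code what takes one or more steps of `tstep`. -/
theorem reaches_normal (c : Code) (k : Cont) (v : List ℕ) :
    Reaches₁ tstep (run (code c) (cont k) (lst v)) (cfg (stepNormal c k v)) := by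
  induction c generalizing k v with
  | zero' => exact .single rfl
  | succ => cases v <;> exact .single rfl
  | tail => cases v <;> exact .single rfl
  | cons f g ihf _ => exact .head rfl (ihf (.cons₁ g v k) v)
  | comp f g _ ihg => exact .head rfl (ihg (.comp f k) v)
  | case f g ihf ihg =>
    match v with
    | [] => exact .head rfl (ihf k [])
    | 0 :: v => exact .head rfl (ihf k v)
    | (n + 1) :: v => exact .head rfl (ihg k (n :: v))
  | fix f ihf => exact .head rfl (ihf (.fix f k) v)

theorem reaches_ret (k : Cont) (v : List ℕ) :
    Reaches₁ tstep (ret (cont k) (lst v)) (cfg (stepRet k v)) := by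
  induction k generalizing v with
  | halt => exact .single rfl
  | cons₁ f a k _ => exact .head rfl (reaches_normal f (.cons₂ v k) a)
  | cons₂ a k ih =>
    cases a with
    | nil => exact .head rfl (ih (0 :: v))
    | cons n a => exact .head rfl (ih (n :: v))
  | comp f k _ => exact .head rfl (reaches_normal f k v)
  | fix f k ih =>
    match v with
    | [] => exact .head rfl (ih [])
    | 0 :: v => exact .head rfl (ih v)
    | (n + 1) :: v => exact .head rfl (reaches_normal f (.fix f k) v)

/-- The rewriting system simulates Mathlib's abstract machine step by step. -/
theorem respects : Respects step tstep fun c t => t = cfg c := by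
  rintro (v | ⟨k, v⟩) _ rfl
  · rfl
  · exact ⟨_, rfl, reaches_ret k v⟩

/-- Halting of the rewriting system is definedness of the simulated code. -/
theorem eval_run_dom (c : Code) (v : List ℕ) :
    (eval tstep (run (code c) kHalt (lst v))).Dom ↔ (c.eval v).Dom := by
  have h := reaches_eval (reaches_normal c .halt v).to_reflTransGen
  change (eval tstep (run (code c) (cont .halt) (lst v))).Dom ↔ _
  rw [h]
  refine (tr_eval_dom respects rfl).trans ?_
  rw [stepNormal_eval]
  rfl

theorem con_num (n : ℕ) : WFTerm conSig (num n) := by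
  induction n with
  | zero => simp [num, wfTerm_app, conSig]
  | succ n ih => simpa [num, wfTerm_app, conSig] using ih

theorem con_code (c : Code) : WFTerm conSig (code c) := by
  induction c <;> rw [code, wfTerm_app] <;> simp [conSig] <;> simp_all [conSig]

theorem good_run (c : Code) (n : ℕ) : Good (run (code c) kHalt (lst [n])) := by
  refine ⟨_, _, rfl, by simp, ?_⟩
  have h₁ := con_code c
  have h₂ := con_num n
  simp only [lst, List.forall_mem_cons, wfTerm_app]
  exact ⟨h₁, by simp [conSig], ⟨by simp [conSig], h₂, by simp [conSig]⟩, by simp⟩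

theorem wfTerm_of_good {t : Term} (ht : Good t) : WFTerm sig t := by
  obtain ⟨f, ts, rfl, hf, hts⟩ := ht
  exact .app (List.mem_append_left _ hf) fun s hs =>
    wfTerm_mono (List.subset_append_right _ _) (hts s hs)

theorem primrec_num : Primrec num := by
  have h : Primrec₂ fun (_ : ℕ) (t : Term) => suc t :=
    Term.primrec_app.comp (Primrec.const 1)
      (Primrec.list_cons.comp Primrec.snd (Primrec.const []))
  refine (Primrec.nat_rec₁ zero h).of_eq fun n => ?_
  induction n with
  | zero => rfl
  | succ n ih => rw [num, ← ih]

theorem primrec_run (c : Code) : Primrec fun n : ℕ => run (code c) kHalt (lst [n]) := by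
  have h : Primrec fun n : ℕ => lst [n] :=
    Term.primrec_app.comp (Primrec.const 3)
      (Primrec.list_cons.comp primrec_num (Primrec.const [nil]))
  exact Term.primrec_app.comp (Primrec.const 16) (Primrec.list_cons.comp (Primrec.const _)
    (Primrec.list_cons.comp (Primrec.const _) (Primrec.list_cons.comp h (Primrec.const []))))

/-- Codes in `Turing.ToPartrec` compute all partial recursive functions. -/
theorem exists_code_dom {f : ℕ →. ℕ} (hf : Nat.Partrec f) :
    ∃ c : Code, ∀ n, (c.eval [n]).Dom ↔ (f n).Dom := by
  obtain ⟨c, hc⟩ := Code.exists_code (Nat.Partrec'.part_iff₁.2 (Partrec.nat_iff.2 hf))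
  refine ⟨c, fun n => ?_⟩
  have := hc ⟨[n], rfl⟩
  change c.eval [n] = _ at this
  rw [this]
  rfl

end Sim

/-! ### Completeness -/

theorem wn_single_term_Sigma01Complete :
    Sigma01Complete { n : ℕ | ∃ (sig : List (ℕ × ℕ)) (R : List (Term × Term)) (t : Term),
      WFTRS sig R ∧ WFTerm sig t ∧ n = Nat.pair (encodeSig sig) (Nat.pair (encodeTRS R) t.encode) ∧
      WNon R t } := by
  refine ⟨sigma01_wn, ?_⟩
  rintro B ⟨f, hf, hB⟩
  obtain ⟨c, hc⟩ := Sim.exists_code_dom hf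
  refine ⟨fun n => Nat.pair (encodeSig Sim.sig) (Nat.pair (encodeTRS Sim.rules)
    (Sim.run (Sim.code c) Sim.kHalt (Sim.lst [n])).encode), ?_, fun n => ?_⟩
  · exact (Primrec₂.natPair.comp (Primrec.const _) (Primrec₂.natPair.comp (Primrec.const _)
      (Primrec.encode.comp (Sim.primrec_run c)))).to_comp
  · have good := Sim.good_run c n
    rw [hB, ← hc, ← Sim.eval_run_dom, ← Sim.wnon_iff_eval good]
    constructor
    · exact fun h => ⟨_, _, _, Sim.wfTRS_rules, Sim.wfTerm_of_good good, rfl, h⟩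
    · rintro ⟨sig, R, t, -, -, e, h⟩
      simp only [Nat.pair_eq_pair, encodeTRS_eq, Encodable.encode_inj] at e
      rw [e.2.1, Term.encode_injective e.2.2]
      exact h
end
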